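/- Let N ≅ ℤ^d be a lattice, let 𝒜 = {v_1,...,v_k} ⊂ N generate N as a group with deg(v_i) = 1 for a group homomorphism deg : N → ℤ, let Δ = conv(𝒜), K the cone over Δ, and let Σ be a simplicial fan induced by a regular triangulation of Δ with support K and all rays generated by elements of 𝒜. Then the ring R = ℂ[𝚺] and, for any parameters χ, ξ ∈ N ⊗ ℝ, the R-modules ℂ[𝚺;χ] and the shadow module ℂ[𝚺;χ]_ξ are Cohen–Macaulay of dimension d; moreover, for any basis (g_1,...,g_d) of M = Hom(N,ℤ), the elements Z_j = Σ_{i ∈ I(𝚺)} g_j(v_i)[v_i] form a regular sequence in R, and hence in ℂ[𝚺;χ] and ℂ[𝚺;χ]_ξ. -/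

import Mathlib

namespace GKZpaper

/-- The real cone spanned by the vectors `v i`, `i ∈ I`. -/
def realCone {d k : ℕ} (v : Fin k → Fin d → ℤ) (I : Finset (Fin k)) : Set (Fin d → ℝ) :=
  {x | ∃ c : Fin k → ℝ, (∀ i, 0 ≤ c i) ∧ (∀ i, i ∉ I → c i = 0) ∧
    ∀ j, x j = ∑ i, c i * (v i j : ℝ)}

/-- A (combinatorial model of a) rational simplicial fan together with the marked
lattice vectors `v i`; cones are recorded by the index sets of their generators. -/
structure StackyFan (d k : ℕ) where
  v : Fin k → Fin d → ℤ
  cones : Finset (Finset (Fin k))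
  empty_mem : ∅ ∈ cones
  downClosed : ∀ I ∈ cones, ∀ J ⊆ I, J ∈ cones
  simplicial : ∀ I ∈ cones,
    LinearIndependent ℝ (fun i : I => (fun j => (v i j : ℝ) : Fin d → ℝ))
  inter : ∀ I ∈ cones, ∀ J ∈ cones, realCone v I ∩ realCone v J = realCone v (I ∩ J)

variable {d k : ℕ}

/-- Every `v i` generates a ray of the fan. -/
def HasAllRays (F : StackyFan d k) : Prop := ∀ i, {i} ∈ F.cones

/-- The support of the fan. -/
def support (F : StackyFan d k) : Set (Fin d → ℝ) := ⋃ I ∈ F.cones, realCone F.v I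

/-- Maximal cones. -/
def IsMaxCone (F : StackyFan d k) (I : Finset (Fin k)) : Prop :=
  I ∈ F.cones ∧ ∀ J ∈ F.cones, I ⊆ J → J = I

def intPt {d : ℕ} (n : Fin d → ℤ) : Fin d → ℝ := fun j => (n j : ℝ)

/-- `Bx(σ;β)` for a complex parameter `β`: tuples `α` with `∑ αᵢ vᵢ ∈ N + β`,
`0 ≤ Re αᵢ < 1`, supported on `I`. -/
def BxCone (F : StackyFan d k) (β : Fin d → ℂ) (I : Finset (Fin k)) : Set (Fin k → ℂ) :=
  {α | (∀ i, 0 ≤ (α i).re ∧ (α i).re < 1) ∧ (∀ i, i ∉ I → α i = 0) ∧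
    ∃ n : Fin d → ℤ, ∀ j, ∑ i, α i * (F.v i j : ℂ) = (n j : ℂ) + β j}

/-- `Bx(𝚺;β)`: the union over the maximal cones. -/
def Bx (F : StackyFan d k) (β : Fin d → ℂ) : Set (Fin k → ℂ) :=
  {α | ∃ I, IsMaxCone F I ∧ α ∈ BxCone F β I}

/-- Real version of `Bx(σ;γ)`. -/
def BxConeR (F : StackyFan d k) (γ : Fin d → ℝ) (I : Finset (Fin k)) : Set (Fin k → ℝ) :=
  {a | (∀ i, 0 ≤ a i ∧ a i < 1) ∧ (∀ i, i ∉ I → a i = 0) ∧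
    ∃ n : Fin d → ℤ, ∀ j, ∑ i, a i * (F.v i j : ℝ) = (n j : ℝ) + γ j}

def BxR (F : StackyFan d k) (γ : Fin d → ℝ) : Set (Fin k → ℝ) :=
  {a | ∃ I, IsMaxCone F I ∧ a ∈ BxConeR F γ I}

/-- `Box(σ;γ) ⊂ N ⊗ ℝ` for a real parameter `γ`. -/
def BoxCone (F : StackyFan d k) (γ : Fin d → ℝ) (I : Finset (Fin k)) : Set (Fin d → ℝ) :=
  {c | (∃ n : Fin d → ℤ, ∀ j, c j = (n j : ℝ) + γ j) ∧
    ∃ a ∈ BxConeR F γ I, ∀ j, c j = ∑ i, a i * (F.v i j : ℝ)}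

def Box (F : StackyFan d k) (γ : Fin d → ℝ) : Set (Fin d → ℝ) :=
  {c | ∃ I, IsMaxCone F I ∧ c ∈ BoxCone F γ I}

/-- `I` is the minimal cone of the fan containing the point `x`. -/
def IsMinConeAt (F : StackyFan d k) (x : Fin d → ℝ) (I : Finset (Fin k)) : Prop :=
  I ∈ F.cones ∧ x ∈ realCone F.v I ∧ ∀ J ∈ F.cones, x ∈ realCone F.v J → I ⊆ J

/-- `w ∈ ∑ αᵢ vᵢ + ∑_{i ∈ I} ℤ₊ vᵢ`. -/
def shiftMem (F : StackyFan d k) (I : Finset (Fin k)) (α : Fin k → ℂ) (w : Fin d → ℂ) : Prop :=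
  ∃ m : Fin k → ℕ, (∀ i, i ∉ I → m i = 0) ∧
    ∀ j, w j = ∑ i, (α i + (m i : ℂ)) * (F.v i j : ℂ)

/-- Indexing set for the basis `[n+β, α]` of the deformed module `ℤ[𝚺;β]` (Definition 2). -/
def DefBasis (F : StackyFan d k) (β : Fin d → ℂ) : Set ((Fin d → ℂ) × (Fin k → ℂ)) :=
  {p | (∃ n : Fin d → ℤ, ∀ j, p.1 j = (n j : ℂ) + β j) ∧
    ∃ I, IsMaxCone F I ∧ p.2 ∈ BxCone F β I ∧ shiftMem F I p.2 p.1}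

/-- The defining condition for `[n'] ⬝ [n+β,α] = [n'+n+β,α']` via the maximal cone `I`. -/
def ActRelVia (F : StackyFan d k) (β : Fin d → ℂ) (I : Finset (Fin k)) (n' : Fin d → ℤ)
    (p p' : (Fin d → ℂ) × (Fin k → ℂ)) : Prop :=
  IsMaxCone F I ∧ intPt n' ∈ realCone F.v I ∧
    p.2 ∈ BxCone F β I ∧ shiftMem F I p.2 p.1 ∧
    p'.2 ∈ BxCone F β I ∧ shiftMem F I p'.2 p'.1 ∧
    ∀ j, p'.1 j = (n' j : ℂ) + p.1 j

/-- `[n'] ⬝ [n+β,α] = [n'+n+β,α']` (the product is nonzero with value `p'`). -/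
def ActRel (F : StackyFan d k) (β : Fin d → ℂ) (n' : Fin d → ℤ)
    (p p' : (Fin d → ℂ) × (Fin k → ℂ)) : Prop :=
  ∃ I, ActRelVia F β I n' p p'

/-- `Re β + δ Im β`, as a real vector. -/
def reDeform (β : Fin d → ℂ) (δ : ℝ) : Fin d → ℝ := fun j => (β j).re + δ * (β j).im

/-- `Re β + δ Im β`, regarded inside `N ⊗ ℂ`. -/
def reDeformC (β : Fin d → ℂ) (δ : ℝ) : Fin d → ℂ := fun j => ((β j).re + δ * (β j).im : ℝ)

end GKZpaper

namespace GKZpaper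

variable {d k : ℕ}

/-- The cone `K ⊂ N ⊗ ℝ` over `Δ = conv(𝒜)`: the nonnegative span of the `vᵢ`. -/
def Kcone (v : Fin k → Fin d → ℤ) : Set (Fin d → ℝ) :=
  {x | ∃ c : Fin k → ℝ, (∀ i, 0 ≤ c i) ∧ ∀ j, x j = ∑ i, c i * (v i j : ℝ)}

/-- `I(𝚺)`: the indices `i` such that `vᵢ` generates a ray of the fan. -/
def raysIdx (F : StackyFan d k) : Set (Fin k) := {i | {i} ∈ F.cones}

/-- The lattice points of `K`. -/
def latticeK (v : Fin k → Fin d → ℤ) : Set (Fin d → ℤ) := {n | intPt n ∈ Kcone v}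

/-- The setting of §4: `𝒜 = {v₁,…,v_k}` generates `N` as a group, `deg(vᵢ) = 1` for a
homomorphism `deg : N → ℤ`, and `Σ` is a fan coming from a regular triangulation of
`Δ = conv 𝒜`, with support `K` and rays among the `vᵢ`. -/
structure GKZSetting (d k : ℕ) where
  F : StackyFan d k
  deg : (Fin d → ℤ) →ₗ[ℤ] ℤ
  hdeg : ∀ i, deg (F.v i) = 1
  hgen : Submodule.span ℤ (Set.range F.v) = ⊤
  hsupp : support F = Kcone F.v
  /-- regularity of the triangulation: a convex piecewise linear support function,
  linear exactly on the maximal cones. -/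
  hreg : ∃ η : (Fin d → ℝ) → ℝ, ConvexOn ℝ (Kcone F.v) η ∧
    ∀ I, IsMaxCone F I → ∃ L : (Fin d → ℝ) →ₗ[ℝ] ℝ,
      (∀ x ∈ realCone F.v I, η x = L x) ∧
      ∀ x ∈ Kcone F.v, x ∉ realCone F.v I → L x < η x

/-- The set `L(α,v)` of Definition 4.3: tuples `l` with `∑ lᵢ vᵢ = β - v` and
`lᵢ - αᵢ ∈ ℤ` for all `i`. -/
def Lset (v : Fin k → Fin d → ℤ) (β : Fin d → ℂ) (α : Fin k → ℂ) (w : Fin d → ℤ) :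
    Set (Fin k → ℂ) :=
  {l | (∀ j, ∑ i, l i * (v i j : ℂ) = β j - (w j : ℂ)) ∧ ∀ i, ∃ z : ℤ, l i - α i = (z : ℂ)}

/-- The generating points of the shadow module `ℂ[𝚺;χ]_ξ`: the points `w = n + χ` of `K`
with `w + εξ ∈ K` for all sufficiently small `ε > 0`. -/
def ShadowPts (F : StackyFan d k) (χ ξ : Fin d → ℝ) : Set (Fin d → ℝ) :=
  {w | (∃ n : Fin d → ℤ, ∀ j, w j = (n j : ℝ) + χ j) ∧ w ∈ Kcone F.v ∧
    ∃ ε₀ : ℝ, 0 < ε₀ ∧ ∀ ε : ℝ, 0 < ε → ε ≤ ε₀ →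
      (fun j => w j + ε * ξ j) ∈ Kcone F.v}

/-- `Re β`. -/
def rePt (β : Fin d → ℂ) : Fin d → ℝ := fun j => (β j).re

end GKZpaper

namespace GKZpaper

variable {d k : ℕ}

/-- Two lattice points lie in a common cone of the fan. -/
def commonCone (F : StackyFan d k) (x y : Fin d → ℝ) : Prop :=
  ∃ I ∈ F.cones, x ∈ realCone F.v I ∧ y ∈ realCone F.v I

/-- The polynomial ring on the generators `[n]`, `n ∈ K ∩ N`, presenting `R = ℂ[𝚺]`. -/
abbrev FreeA (v : Fin k → Fin d → ℤ) := MvPolynomial ↥(latticeK v) ℂ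

/-- The defining relations of the deformed semigroup ring `ℂ[𝚺]`:
`[a]⬝[b] = [a+b]` when `a, b` lie in a common cone of `Σ`, `[a]⬝[b] = 0` otherwise,
and `[0] = 1`. -/
def relR (F : StackyFan d k) : Set (FreeA F.v) :=
  {p | ∃ a b c : ↥(latticeK F.v),
      commonCone F (intPt ↑a) (intPt ↑b) ∧ ((c : Fin d → ℤ) = ↑a + ↑b) ∧
      p = MvPolynomial.X a * MvPolynomial.X b - MvPolynomial.X c} ∪
  {p | ∃ a b : ↥(latticeK F.v), ¬ commonCone F (intPt ↑a) (intPt ↑b) ∧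
      p = MvPolynomial.X a * MvPolynomial.X b} ∪
  {p | ∃ z : ↥(latticeK F.v), ((z : Fin d → ℤ) = 0) ∧ p = MvPolynomial.X z - 1}

/-- The deformed semigroup ring `R = ℂ[𝚺]`, by generators and relations. -/
abbrev Rring (F : StackyFan d k) := FreeA F.v ⧸ Ideal.span (relR F)

/-- The element `[n]` of `R = ℂ[𝚺]`. -/
noncomputable def Rgen (F : StackyFan d k) (n : ↥(latticeK F.v)) : Rring F :=
  Ideal.Quotient.mk _ (MvPolynomial.X n)

lemma v_mem_latticeK (v : Fin k → Fin d → ℤ) (i : Fin k) : v i ∈ latticeK v := by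
  refine ⟨fun i' => if i' = i then 1 else 0, fun i' => by positivity, fun j => ?_⟩
  simp [intPt, ite_mul, Finset.sum_ite_eq']

/-- The element `Z_g = ∑_{i ∈ I(𝚺)} g(vᵢ)[vᵢ] ∈ R`. -/
noncomputable def Zelt (F : StackyFan d k) (g : (Fin d → ℤ) →ₗ[ℤ] ℤ) : Rring F :=
  letI := Classical.propDecidable
  ∑ i, if i ∈ raysIdx F then
    (algebraMap ℂ (Rring F) ((g (F.v i) : ℤ) : ℂ)) * Rgen F ⟨F.v i, v_mem_latticeK F.v i⟩
  else 0

/-- The lattice points indexing the basis `[n+χ]` of `ℂ[𝚺;χ]`. -/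
def Ppts (v : Fin k → Fin d → ℤ) (χ : Fin d → ℝ) : Set (Fin d → ℤ) :=
  {n | (fun j => (n j : ℝ) + χ j) ∈ Kcone v}

/-- The free `R`-module on the symbols `[n+χ]`. -/
abbrev MfreeR (F : StackyFan d k) (χ : Fin d → ℝ) := ↥(Ppts F.v χ) →₀ Rring F

/-- The defining relations of the `R`-module `ℂ[𝚺;χ]`: `[a]⬝[w] = [a+w]` if `a` and `w`
lie in a common cone, and `[a]⬝[w] = 0` otherwise. -/
def relM (F : StackyFan d k) (χ : Fin d → ℝ) : Set (MfreeR F χ) :=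
  {x | ∃ (a : ↥(latticeK F.v)) (w w' : ↥(Ppts F.v χ)),
      commonCone F (intPt ↑a) (fun j => ((w : Fin d → ℤ) j : ℝ) + χ j) ∧
      ((w' : Fin d → ℤ) = ↑a + ↑w) ∧
      x = Finsupp.single w (Rgen F a) - Finsupp.single w' 1} ∪
  {x | ∃ (a : ↥(latticeK F.v)) (w : ↥(Ppts F.v χ)),
      ¬ commonCone F (intPt ↑a) (fun j => ((w : Fin d → ℤ) j : ℝ) + χ j) ∧
      x = Finsupp.single w (Rgen F a)}

/-- The `R`-module `ℂ[𝚺;χ]`, by generators and relations. -/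
abbrev Mmod (F : StackyFan d k) (χ : Fin d → ℝ) :=
  MfreeR F χ ⧸ Submodule.span (Rring F) (relM F χ)

/-- The class of the basis element `[n+χ]` in `ℂ[𝚺;χ]`. -/
noncomputable def Mgen (F : StackyFan d k) (χ : Fin d → ℝ) (w : ↥(Ppts F.v χ)) :
    Mmod F χ :=
  Submodule.Quotient.mk (Finsupp.single w 1)

/-- The shadow module `ℂ[𝚺;χ]_ξ ⊆ ℂ[𝚺;χ]` (Definition 4.1): the `R`-submodule generated
by the `[n+χ]` with `n + χ + εξ ∈ K` for all sufficiently small `ε > 0`. -/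
noncomputable def ShadowSub (F : StackyFan d k) (χ ξ : Fin d → ℝ) :
    Submodule (Rring F) (Mmod F χ) :=
  Submodule.span (Rring F)
    {x | ∃ w : ↥(Ppts F.v χ),
      ((fun j => ((w : Fin d → ℤ) j : ℝ) + χ j) ∈ ShadowPts F χ ξ) ∧ x = Mgen F χ w}

end GKZpaper

/-!
Perturb `ξ` to a generic direction `ζ ∈ ξ + K`. The half-open full-dimensional cones, formed by
the points that enter a given cone when moved slightly in the direction `ζ`, cut the lattice
points generating `ℂ[𝚺;χ]_ξ` into disjoint cells. Order the cones by the value at `ζ` of the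
corresponding linear pieces of a strict support function: a nonzero product of `[a]` with a basis
element stays in the same cell or moves to one of lower height, so the unions of cells of low
height filter `ℂ[𝚺;χ]_ξ`. Each graded piece is a direct sum of copies of `ℂ[xᵢ | i ∈ s]`, one for
each lattice point of a half-open box, and there the `Z_j` act as `d` linearly independent linear
forms. They are therefore regular on every graded piece, hence on `ℂ[𝚺;χ]_ξ`. Taking `ξ = 0` gives
`ℂ[𝚺;χ]`, and `χ = 0` then gives `ℂ[𝚺]`.

For the dimension, the regular sequence shows that `dim ℂ[𝚺] ≥ d`. Conversely, only the lattice
points of a single full-dimensional cone survive modulo a prime, so the quotient is integral over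
a subalgebra generated by `d` elements.
-/

namespace GKZpaper

open Filter Topology Module MeasureTheory RingTheory.Sequence

/-! ### Regular sequences and Krull dimension -/

lemma isWeaklyRegular_of_subsingleton {R M : Type*} [CommRing R] [AddCommGroup M] [Module R M]
    [Subsingleton M] (rs : List R) : IsWeaklyRegular M rs :=
  ⟨fun _ _ => Function.injective_of_subsingleton _⟩

lemma isWeaklyRegular_of_exact {R A B C : Type*} [CommRing R] [AddCommGroup A] [Module R A]
    [AddCommGroup B] [Module R B] [AddCommGroup C] [Module R C] {f : A →ₗ[R] B} {g : B →ₗ[R] C}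
    (hf : Function.Injective f) (hfg : Function.Exact f g) (hg : Function.Surjective g)
    {rs : List R} (hA : IsWeaklyRegular A rs) (hC : IsWeaklyRegular C rs) :
    IsWeaklyRegular B rs := by
  induction rs generalizing A B C with
  | nil => exact IsWeaklyRegular.nil R B
  | cons r rs ih =>
    rw [isWeaklyRegular_cons_iff] at hA hC ⊢
    have hinj : Function.Injective (QuotSMulTop.map r f) := by
      have h0 : Function.Exact (0 : A →ₗ[R] A) f :=
        LinearMap.exact_iff.mpr (by rw [LinearMap.ker_eq_bot.mpr hf, LinearMap.range_zero])
      have := QuotSMulTop.map_first_exact_on_four_term_exact_of_isSMulRegular_last h0 hfg hC.1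
      rw [LinearMap.exact_iff] at this
      rw [← LinearMap.ker_eq_bot, this, map_zero, LinearMap.range_zero]
    exact ⟨isSMulRegular_of_range_eq_ker hf (LinearMap.exact_iff.mp hfg).symm hA.1 hC.1,
      ih hinj (QuotSMulTop.map_exact r hfg hg) (QuotSMulTop.map_surjective r hg) hA.2 hC.2⟩

lemma isRegular_of_submodule_of_quotient {R M : Type*} [CommRing R] [AddCommGroup M] [Module R M]
    (N : Submodule R M) {rs : List R} (hN : IsWeaklyRegular N rs) (hQ : IsRegular (M ⧸ N) rs) :
    IsRegular M rs := by
  refine ⟨isWeaklyRegular_of_exact N.injective_subtype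
    (LinearMap.exact_subtype_mkQ N) N.mkQ_surjective hN hQ.1, fun htop => hQ.2 ?_⟩
  have := congrArg (Submodule.map N.mkQ) htop
  rwa [Submodule.map_smul'', Submodule.map_top, Submodule.range_mkQ] at this

lemma isRegular_of_ker_eq {R S M C : Type*} [CommRing R] [CommRing S] [AddCommGroup M]
    [Module R M] [AddCommGroup C] [Module S C] {N : Submodule R M} {f : M →+ C}
    (hf : Function.Surjective f) (hker : ∀ x, f x = 0 ↔ x ∈ N) {as : List R} {bs : List S}
    (hsmul : List.Forall₂ (fun r s => ∀ x, f (r • x) = s • f x) as bs)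
    (hN : IsWeaklyRegular N as) (hC : IsRegular C bs) : IsRegular M as := by
  have hNf : N.toAddSubgroup = f.ker := AddSubgroup.ext fun x => (hker x).symm
  let e : (M ⧸ N) ≃+ C := (QuotientAddGroup.quotientAddEquivOfEq hNf).trans
    (QuotientAddGroup.quotientKerEquivOfSurjective f hf)
  have he (x : M) : e (Submodule.Quotient.mk x) = f x := rfl
  refine isRegular_of_submodule_of_quotient N hN
    ((AddEquiv.isRegular_congr (e := e) (hsmul.imp fun r s hrs x => ?_)).mpr hC)
  obtain ⟨x, rfl⟩ := Submodule.Quotient.mk_surjective _ x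
  rw [← Submodule.Quotient.mk_smul, he, he, hrs]

lemma ideal_ofList_take_ofFn {R : Type*} [CommRing R] {n : ℕ} (r : Fin n → R) (i : ℕ) :
    Ideal.ofList ((List.ofFn r).take i) = Ideal.span (r '' {j | (j : ℕ) < i}) := by
  refine congrArg Ideal.span (Set.ext fun x => ?_)
  simp only [Set.mem_ofPred_eq, Set.mem_image, List.mem_take_iff_getElem, List.length_ofFn,
    List.getElem_ofFn]
  constructor
  · rintro ⟨j, hj, rfl⟩
    exact ⟨⟨j, by omega⟩, (lt_min_iff.mp hj).1, rfl⟩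
  · rintro ⟨j, hj, rfl⟩
    exact ⟨j, by omega, rfl⟩

lemma mem_ideal_span_X_image_of_X_mul {R σ : Type*} [CommRing R] {s : Set σ} {i : σ}
    (hi : i ∉ s) {p : MvPolynomial σ R}
    (hp : MvPolynomial.X i * p ∈ Ideal.span (MvPolynomial.X '' s)) :
    p ∈ Ideal.span (MvPolynomial.X '' s) := by
  classical
  rw [MvPolynomial.mem_ideal_span_X_image] at hp ⊢
  intro m hm
  obtain ⟨j, hj, hmj⟩ := hp (m + Finsupp.single i 1) (by
    rw [MvPolynomial.mem_support_iff, mul_comm, MvPolynomial.coeff_mul_X]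
    exact MvPolynomial.mem_support_iff.mp hm)
  have hij : i ≠ j := fun h => hi (h ▸ hj)
  exact ⟨j, hj, by simpa [Finsupp.single_apply, hij] using hmj⟩

lemma isRegular_ofFn_X (R : Type*) [CommRing R] [Nontrivial R] (n : ℕ) :
    IsRegular (MvPolynomial (Fin n) R) (List.ofFn fun j : Fin n => MvPolynomial.X (R := R) j) := by
  refine ⟨⟨fun i hi => ?_⟩, fun htop => ?_⟩
  · rw [isSMulRegular_quotient_iff_mem_of_smul_mem, ideal_ofList_take_ofFn, Ideal.smul_eq_mul,
      Ideal.mul_top, List.getElem_ofFn]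
    exact fun p hp => mem_ideal_span_X_image_of_X_mul
      (s := {j : Fin n | (j : ℕ) < i}) (lt_irrefl i) hp
  · have hle : Ideal.ofList (List.ofFn fun j : Fin n => MvPolynomial.X (R := R) j) ≤
        RingHom.ker (MvPolynomial.constantCoeff (R := R)) := by
      refine Ideal.span_le.mpr fun p hp => ?_
      obtain ⟨j, rfl⟩ := List.mem_ofFn.mp hp
      exact MvPolynomial.constantCoeff_X R j
    rw [Ideal.smul_eq_mul, Ideal.mul_top] at htop
    exact RingHom.ker_ne_top _ (top_le_iff.mp (htop.le.trans hle))

/-- The linear forms `∑ a, W j a • X a` attached to the rows of a matrix. -/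
noncomputable def linearForm {R ι σ : Type*} [CommRing R] [Fintype σ] (W : Matrix ι σ R) (j : ι) :
    MvPolynomial σ R :=
  ∑ a, MvPolynomial.C (W j a) * MvPolynomial.X a

lemma aeval_linearForm {R ι σ τ : Type*} [CommRing R] [Fintype σ] [Fintype τ]
    (W : Matrix ι σ R) (V : Matrix σ τ R) (j : ι) :
    MvPolynomial.aeval (linearForm V) (linearForm W j) = linearForm (W * V) j := by
  simp only [linearForm, map_sum, map_mul, MvPolynomial.aeval_C, MvPolynomial.aeval_X,
    MvPolynomial.algebraMap_eq, Finset.mul_sum, Matrix.mul_apply, Finset.sum_mul, mul_assoc]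
  exact Finset.sum_comm

lemma linearForm_one {R σ : Type*} [CommRing R] [Fintype σ] [DecidableEq σ] (a : σ) :
    linearForm (1 : Matrix σ σ R) a = MvPolynomial.X a := by
  simp [linearForm, Matrix.one_apply]

lemma aeval_linearForm_comp {R ι σ : Type*} [CommRing R] [Fintype σ] [Fintype ι] [DecidableEq ι]
    {W : Matrix ι σ R} {V : Matrix σ ι R} (hWV : W * V = 1) :
    (MvPolynomial.aeval (linearForm V)).comp (MvPolynomial.aeval (linearForm W)) =
      AlgHom.id R (MvPolynomial ι R) := by
  refine MvPolynomial.algHom_ext fun j => ?_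
  rw [AlgHom.comp_apply, MvPolynomial.aeval_X, aeval_linearForm, hWV, linearForm_one,
    AlgHom.id_apply]

lemma isRegular_ofFn_linearForm {R σ : Type*} [CommRing R] [Nontrivial R] [Fintype σ]
    [DecidableEq σ] {n : ℕ} {W : Matrix (Fin n) σ R} {V : Matrix σ (Fin n) R}
    (hWV : W * V = 1) (hVW : V * W = 1) :
    IsRegular (MvPolynomial σ R) (List.ofFn (linearForm W)) := by
  let e : MvPolynomial (Fin n) R ≃ₐ[R] MvPolynomial σ R :=
    AlgEquiv.ofAlgHom (MvPolynomial.aeval (linearForm W)) (MvPolynomial.aeval (linearForm V))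
      (aeval_linearForm_comp hVW) (aeval_linearForm_comp hWV)
  refine (AddEquiv.isRegular_congr (e := e.toRingEquiv.toAddEquiv) ?_).mp (isRegular_ofFn_X R n)
  refine List.forall₂_iff_get.mpr ⟨by simp only [List.length_ofFn], fun i hi _ x => ?_⟩
  have heX (j : Fin n) : e (MvPolynomial.X j) = linearForm W j := MvPolynomial.aeval_X _ j
  simp only [List.get_eq_getElem, List.getElem_ofFn, smul_eq_mul, ← heX]
  exact map_mul e _ x

lemma isRegular_finsupp {R B : Type*} [CommRing R] [Nonempty B] {rs : List R}
    (h : IsRegular R rs) : IsRegular (B →₀ R) rs := by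
  classical
  obtain ⟨b⟩ := ‹Nonempty B›
  refine ⟨((TensorProduct.rid R (B →₀ R)).isWeaklyRegular_congr rs).mp
    (h.1.isWeaklyRegular_lTensor (M₂ := B →₀ R)), fun htop => h.2 ?_⟩
  have hsurj : Function.Surjective (Finsupp.lapply b : (B →₀ R) →ₗ[R] R) := fun r =>
    ⟨Finsupp.single b r, Finsupp.single_eq_same⟩
  have := congrArg (Submodule.map (Finsupp.lapply b)) htop
  rwa [Submodule.map_smul'', Submodule.map_top, LinearMap.range_eq_top.mpr hsurj] at this

lemma isRegular_quotient_of_quotSMulTop {R : Type*} [CommRing R] {r : R} {rs : List R}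
    (h : IsRegular (QuotSMulTop r R) (rs.map (Ideal.Quotient.mk (Ideal.span {r})))) :
    IsRegular (R ⧸ Ideal.span {r}) (rs.map (Ideal.Quotient.mk (Ideal.span {r}))) := by
  let e : QuotSMulTop r R ≃+ (R ⧸ Ideal.span {r}) :=
    (Submodule.quotEquivOfEq _ _ (by
      rw [← Submodule.ideal_span_singleton_smul, smul_eq_mul, Ideal.mul_top])).toAddEquiv
  refine (AddEquiv.isRegular_congr (e := e) (List.forall₂_same.mpr fun s _ x => ?_)).mp h
  obtain ⟨x, rfl⟩ := Submodule.Quotient.mk_surjective _ x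
  obtain ⟨s, rfl⟩ := Ideal.Quotient.mk_surjective s
  rfl

lemma length_le_ringKrullDim_of_isRegular {R : Type*} [CommRing R] {rs : List R}
    (h : IsRegular R rs) : (rs.length : WithBot ℕ∞) ≤ ringKrullDim R := by
  induction hn : rs.length generalizing R rs with
  | zero =>
    have := h.nontrivial
    exact_mod_cast ringKrullDim_nonneg_of_nontrivial (R := R)
  | succ n ih =>
    obtain ⟨r, rs, rfl⟩ := List.exists_cons_of_length_eq_add_one hn
    rw [isRegular_cons_iff'] at h
    have hr : r ∈ nonZeroDivisors R := mem_nonZeroDivisors_iff_right.mpr fun x hx =>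
      h.1.right_eq_zero_of_smul (by rwa [smul_eq_mul, mul_comm])
    calc ((n + 1 : ℕ) : WithBot ℕ∞) = n + 1 := by push_cast; rfl
      _ ≤ ringKrullDim (R ⧸ Ideal.span {r}) + 1 := by
        gcongr
        exact ih (isRegular_quotient_of_quotSMulTop h.2) (by simpa using hn)
      _ ≤ ringKrullDim R := ringKrullDim_quotient_succ_le_of_nonZeroDivisor hr

lemma ringKrullDim_le_of_isIntegral (A R : Type*) [CommRing A] [CommRing R] [Algebra A R]
    [Algebra.IsIntegral A R] : ringKrullDim R ≤ ringKrullDim A :=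
  Order.krullDim_le_of_strictMono (PrimeSpectrum.comap (algebraMap A R)) fun p q hpq =>
    Ideal.IsIntegral.comap_lt_comap (I := p.asIdeal) (J := q.asIdeal) hpq

lemma ringKrullDim_le_card_of_isIntegral_adjoin {K R ι : Type*} [Field K] [CommRing R]
    [Algebra K R] [Finite ι] (x : ι → R) {S : Set R} (hS : Algebra.adjoin K S = ⊤)
    (h : ∀ a ∈ S, IsIntegral (Algebra.adjoin K (Set.range x)) a) :
    ringKrullDim R ≤ Nat.card ι := by
  have : Algebra.IsIntegral (Algebra.adjoin K (Set.range x)) R := ⟨fun a => by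
    have hle : Algebra.adjoin K S ≤
        (integralClosure (Algebra.adjoin K (Set.range x)) R).restrictScalars K :=
      Algebra.adjoin_le h
    exact hle (hS ▸ Algebra.mem_top)⟩
  calc ringKrullDim R ≤ ringKrullDim (Algebra.adjoin K (Set.range x)) :=
        ringKrullDim_le_of_isIntegral _ R
    _ = ringKrullDim (MvPolynomial.aeval (R := K) x).range := by
        rw [Algebra.adjoin_range_eq_range_aeval]
    _ ≤ ringKrullDim (MvPolynomial ι K) :=
        ringKrullDim_le_of_surjective _ (MvPolynomial.aeval (R := K) x).rangeRestrict_surjective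
    _ = Nat.card ι := by
        rw [MvPolynomial.ringKrullDim_of_isNoetherianRing, ringKrullDim_eq_zero_of_field, zero_add]

lemma ringKrullDim_le_of_forall_isPrime {R : Type*} [CommRing R] {n : WithBot ℕ∞}
    (h : ∀ p : Ideal R, p.IsPrime → ringKrullDim (R ⧸ p) ≤ n) : ringKrullDim R ≤ n := by
  rw [ringKrullDim, Order.krullDim_eq_iSup_coheight]
  refine iSup_le fun p => ?_
  have hp := h p.asIdeal p.isPrime
  rw [ringKrullDim_quotient] at hp
  rw [Order.coheight_eq_krullDim_Ici]
  exact hp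

variable {d k : ℕ}

/-! ### Simplicial cones -/

lemma intPt_add (m n : Fin d → ℤ) : intPt (m + n) = intPt m + intPt n :=
  funext fun j => Int.cast_add (m j) (n j)

lemma mem_realCone_iff {v : Fin k → Fin d → ℤ} {I : Finset (Fin k)} {x : Fin d → ℝ} :
    x ∈ realCone v I ↔ ∃ c : Fin k → ℝ, (∀ i, 0 ≤ c i) ∧ ∑ i ∈ I, c i • intPt (v i) = x := by
  constructor
  · rintro ⟨c, hc, hcI, hx⟩
    refine ⟨c, hc, funext fun j => ?_⟩
    rw [hx, Finset.sum_apply]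
    exact Finset.sum_subset I.subset_univ fun i _ hi => by simp [hcI i hi]
  · rintro ⟨c, hc, rfl⟩
    refine ⟨fun i => if i ∈ I then c i else 0, fun i => ite_nonneg (hc i) le_rfl,
      fun i hi => if_neg hi, fun j => ?_⟩
    simp [intPt, Finset.sum_apply, ite_mul]

lemma Kcone_eq_realCone_univ (v : Fin k → Fin d → ℤ) : Kcone v = realCone v Finset.univ := by
  simp [Kcone, realCone]

lemma realCone_subset_Kcone (v : Fin k → Fin d → ℤ) (I : Finset (Fin k)) :
    realCone v I ⊆ Kcone v :=
  fun _ ⟨c, hc, _, hx⟩ => ⟨c, hc, hx⟩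

lemma exists_mem_cones {F : StackyFan d k} (hsupp : support F = Kcone F.v) {x : Fin d → ℝ}
    (hx : x ∈ Kcone F.v) : ∃ I ∈ F.cones, x ∈ realCone F.v I := by
  rw [← hsupp] at hx
  simpa [support] using hx

lemma zero_mem_realCone (v : Fin k → Fin d → ℤ) (I : Finset (Fin k)) : 0 ∈ realCone v I :=
  mem_realCone_iff.mpr ⟨0, fun _ => le_rfl, by simp⟩

lemma add_mem_realCone {v : Fin k → Fin d → ℤ} {I : Finset (Fin k)} {x y : Fin d → ℝ}
    (hx : x ∈ realCone v I) (hy : y ∈ realCone v I) : x + y ∈ realCone v I := by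
  obtain ⟨c, hc, rfl⟩ := mem_realCone_iff.mp hx
  obtain ⟨e, he, rfl⟩ := mem_realCone_iff.mp hy
  exact mem_realCone_iff.mpr ⟨c + e, fun i => add_nonneg (hc i) (he i), by
    simp [add_smul, Finset.sum_add_distrib]⟩

lemma smul_mem_realCone {v : Fin k → Fin d → ℤ} {I : Finset (Fin k)} {x : Fin d → ℝ} {t : ℝ}
    (ht : 0 ≤ t) (hx : x ∈ realCone v I) : t • x ∈ realCone v I := by
  obtain ⟨c, hc, rfl⟩ := mem_realCone_iff.mp hx
  exact mem_realCone_iff.mpr ⟨t • c, fun i => mul_nonneg ht (hc i), by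
    simp [Finset.smul_sum, mul_smul]⟩

lemma add_mem_Kcone {v : Fin k → Fin d → ℤ} {x y : Fin d → ℝ} (hx : x ∈ Kcone v)
    (hy : y ∈ Kcone v) : x + y ∈ Kcone v := by
  rw [Kcone_eq_realCone_univ] at *
  exact add_mem_realCone hx hy

lemma smul_mem_Kcone {v : Fin k → Fin d → ℤ} {x : Fin d → ℝ} {t : ℝ} (ht : 0 ≤ t)
    (hx : x ∈ Kcone v) : t • x ∈ Kcone v := by
  rw [Kcone_eq_realCone_univ] at *
  exact smul_mem_realCone ht hx

lemma generator_mem_realCone (v : Fin k → Fin d → ℤ) {I : Finset (Fin k)} {i : Fin k}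
    (hi : i ∈ I) : intPt (v i) ∈ realCone v I :=
  mem_realCone_iff.mpr ⟨Pi.single i 1, fun j => by
    rcases eq_or_ne j i with rfl | h <;> simp [*], by
    simp [Pi.single_apply, ite_smul, hi]⟩

lemma mem_span_of_mem_realCone {v : Fin k → Fin d → ℤ} {I : Finset (Fin k)} {x : Fin d → ℝ}
    (hx : x ∈ realCone v I) : x ∈ Submodule.span ℝ ((fun i => intPt (v i)) '' I) := by
  obtain ⟨c, -, rfl⟩ := mem_realCone_iff.mp hx
  exact Submodule.sum_mem _ fun i hi =>
    Submodule.smul_mem _ _ (Submodule.subset_span (Set.mem_image_of_mem _ hi))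

lemma linearIndepOn_of_mem_cones (F : StackyFan d k) {I : Finset (Fin k)} (hI : I ∈ F.cones) :
    LinearIndepOn ℝ (fun i => intPt (F.v i)) (I : Set (Fin k)) :=
  F.simplicial I hI

lemma mem_realCone_left_of_add_mem (F : StackyFan d k) {I J : Finset (Fin k)} (hI : I ∈ F.cones)
    (hJ : J ∈ F.cones) {x y : Fin d → ℝ} (hx : x ∈ realCone F.v I) (hy : y ∈ realCone F.v I)
    (hxy : x + y ∈ realCone F.v J) : x ∈ realCone F.v J := by
  have hmem : x + y ∈ realCone F.v (I ∩ J) := F.inter I hI J hJ ▸ ⟨add_mem_realCone hx hy, hxy⟩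
  obtain ⟨c, hc, rfl⟩ := mem_realCone_iff.mp hx
  obtain ⟨e, he, rfl⟩ := mem_realCone_iff.mp hy
  obtain ⟨f, -, hf⟩ := mem_realCone_iff.mp hmem
  have hcoeff : ∀ i ∈ I, c i + e i - (if i ∈ J then f i else 0) = 0 := by
    refine linearIndepOn_finset_iff.mp (linearIndepOn_of_mem_cones F hI) _ ?_
    simp only [sub_smul, add_smul, Finset.sum_sub_distrib, Finset.sum_add_distrib, ite_smul,
      zero_smul, ← Finset.sum_filter, Finset.filter_mem_eq_inter, hf, sub_self]
  refine mem_realCone_iff.mpr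
    ⟨fun i => if i ∈ I then c i else 0, fun i => ite_nonneg (hc i) le_rfl, ?_⟩
  simp only [ite_smul, zero_smul, ← Finset.sum_filter, Finset.filter_mem_eq_inter,
    Finset.inter_comm J I]
  refine Finset.sum_subset Finset.inter_subset_left fun i hi hiJ => ?_
  have hci : c i + e i = 0 := by simpa [show i ∉ J by simpa [hi] using hiJ] using hcoeff i hi
  rw [show c i = 0 by linarith [hc i, he i], zero_smul]

lemma commonCone.add_mem_realCone_iff {F : StackyFan d k} {x y : Fin d → ℝ}
    (h : commonCone F x y) {J : Finset (Fin k)} (hJ : J ∈ F.cones) :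
    x + y ∈ realCone F.v J ↔ x ∈ realCone F.v J ∧ y ∈ realCone F.v J := by
  obtain ⟨I, hI, hx, hy⟩ := h
  exact ⟨fun hxy => ⟨mem_realCone_left_of_add_mem F hI hJ hx hy hxy,
    mem_realCone_left_of_add_mem F hI hJ hy hx (add_comm x y ▸ hxy)⟩,
    fun hxy => add_mem_realCone hxy.1 hxy.2⟩

lemma generator_notMem_realCone (F : StackyFan d k) {I : Finset (Fin k)} (hI : I ∈ F.cones)
    {i : Fin k} (hi : i ∈ raysIdx F) (hiI : i ∉ I) : intPt (F.v i) ∉ realCone F.v I := by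
  intro hmem
  have hzero : intPt (F.v i) ∈ realCone F.v ({i} ∩ I) :=
    F.inter {i} hi I hI ▸ ⟨generator_mem_realCone F.v (Finset.mem_singleton_self i), hmem⟩
  rw [Finset.singleton_inter_of_notMem hiI] at hzero
  obtain ⟨c, -, hc⟩ := mem_realCone_iff.mp hzero
  exact (linearIndepOn_of_mem_cones F hi).ne_zero (Finset.mem_singleton_self i) hc.symm

/-! ### Full-dimensional cones -/

/-- The `d`-dimensional cones of the fan. -/
abbrev FullCone (F : StackyFan d k) := {I : Finset (Fin k) // I ∈ F.cones ∧ I.card = d}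

namespace FullCone

variable {F : StackyFan d k}

/-- The generators of a full-dimensional cone as a basis of `N ⊗ ℝ`; its coordinates turn the
cone into the nonnegative orthant. -/
noncomputable def basis (s : FullCone F) : Basis s.1 ℝ (Fin d → ℝ) :=
  basisOfLinearIndependentOfCardEqFinrank' (fun i : s.1 => intPt (F.v i))
    (F.simplicial s.1 s.2.1) (by simpa using s.2.2)

@[simp]
lemma basis_apply (s : FullCone F) (i : s.1) : s.basis i = intPt (F.v i) :=
  congrFun (coe_basisOfLinearIndependentOfCardEqFinrank' _ _ _) i

lemma mem_realCone_iff_repr (s : FullCone F) {x : Fin d → ℝ} :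
    x ∈ realCone F.v s.1 ↔ ∀ i, 0 ≤ s.basis.repr x i := by
  rw [mem_realCone_iff]
  constructor
  · rintro ⟨c, hc, rfl⟩ i
    have hsum : ∑ i ∈ s.1, c i • intPt (F.v i) = ∑ i : s.1, c i • s.basis i := by
      simp only [basis_apply, Finset.sum_coe_sort s.1 fun i => c i • intPt (F.v i)]
    rw [hsum, s.basis.repr_sum_self fun i : s.1 => c i]
    exact hc i
  · intro hx
    refine ⟨fun i => if hi : i ∈ s.1 then s.basis.repr x ⟨i, hi⟩ else 0, fun i => ?_, ?_⟩
    · dsimp only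
      split_ifs with hi
      exacts [hx ⟨i, hi⟩, le_rfl]
    · rw [← Finset.sum_coe_sort s.1]
      simpa using s.basis.sum_repr x

lemma isMaxCone (s : FullCone F) : IsMaxCone F s.1 := by
  refine ⟨s.2.1, fun J hJ hsJ => (Finset.eq_of_subset_of_card_le hsJ ?_).symm⟩
  simpa [s.2.2] using (F.simplicial J hJ).fintype_card_le_finrank

lemma eq_of_repr_pos {s t : FullCone F} {x : Fin d → ℝ} (hs : ∀ i, 0 < s.basis.repr x i)
    (ht : x ∈ realCone F.v t.1) : s = t := by
  have hx : x ∈ realCone F.v (s.1 ∩ t.1) :=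
    F.inter s.1 s.2.1 t.1 t.2.1 ▸ ⟨s.mem_realCone_iff_repr.mpr fun i => (hs i).le, ht⟩
  have hsub : s.1 ⊆ t.1 := by
    intro i hi
    by_contra hit
    have hspan : x ∈ Submodule.span ℝ (s.basis '' {j | j ≠ ⟨i, hi⟩}) := by
      refine Submodule.span_mono ?_ (mem_span_of_mem_realCone hx)
      rintro _ ⟨j, hj, rfl⟩
      obtain ⟨hjs, hjt⟩ := Finset.mem_inter.mp (Finset.mem_coe.mp hj)
      exact ⟨⟨j, hjs⟩, fun h => hit (Subtype.mk.inj h ▸ hjt), s.basis_apply _⟩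
    exact s.basis.mem_span_image.mp hspan (Finsupp.mem_support_iff.mpr (hs ⟨i, hi⟩).ne') rfl
  exact Subtype.ext (Finset.eq_of_subset_of_card_le hsub (by rw [s.2.2, t.2.2]))

end FullCone

/-! ### Generic perturbations and half-open cones -/

lemma dense_forall_add_notMem_of_surjective {E V : Type*} [NormedAddCommGroup E]
    [NormedSpace ℝ E] [FiniteDimensional ℝ E] [AddCommGroup V] [Module ℝ V] {f : E →ₗ[ℝ] V}
    (hf : Function.Surjective f) (b : V) {P : Set (Submodule ℝ V)} (hP : P.Countable)
    (hproper : ∀ W ∈ P, W ≠ ⊤) : Dense {c | ∀ W ∈ P, b + f c ∉ W} := by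
  borelize E
  refine Measure.dense_of_ae (μ := (Measure.addHaar : Measure E))
    ((ae_ball_iff hP).mpr fun W hW => ?_)
  let A : AffineSubspace ℝ E := W.toAffineSubspace.comap (AffineMap.const ℝ E b + f.toAffineMap)
  refine measure_mono_null (fun c hc => not_not.mp hc) (Measure.addHaar_affineSubspace _ A fun hA =>
    hproper W hW (Submodule.eq_top_iff'.mpr fun x => ?_))
  obtain ⟨c, hc⟩ := hf (x - b)
  have hcA : b + f c ∈ W := show c ∈ A from hA ▸ AffineSubspace.mem_top ℝ E c
  rwa [hc, add_sub_cancel] at hcA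

lemma exists_mem_nhds_sub_mem_Kcone_forall_notMem {v : Fin k → Fin d → ℤ}
    (hspan : Submodule.span ℝ (Set.range fun i => intPt (v i)) = ⊤) {ξ : Fin d → ℝ}
    {U : Set (Fin d → ℝ)} (hU : U ∈ 𝓝 ξ) {P : Set (Submodule ℝ (Fin d → ℝ))} (hP : P.Countable)
    (hproper : ∀ W ∈ P, W ≠ ⊤) : ∃ ζ ∈ U, ζ - ξ ∈ Kcone v ∧ ∀ W ∈ P, ζ ∉ W := by
  let f : (Fin k → ℝ) →ₗ[ℝ] (Fin d → ℝ) := Fintype.linearCombination ℝ fun i => intPt (v i)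
  have hf : Function.Surjective f := by
    rw [← LinearMap.range_eq_top, Fintype.range_linearCombination, hspan]
  have hcont : Continuous fun c => ξ + f c :=
    continuous_const.add f.continuous_of_finiteDimensional
  have hnear : ∀ᶠ c in 𝓝 (0 : Fin k → ℝ), ξ + f c ∈ interior U :=
    hcont.continuousAt.eventually_mem (by simpa using hU)
  have hconst : Tendsto (fun (r : ℝ) (_ : Fin k) => r) (𝓝[>] 0) (𝓝 0) :=
    (Continuous.tendsto (by fun_prop) (0 : ℝ)).mono_left nhdsWithin_le_nhds
  obtain ⟨r, hrU, hr⟩ := ((hconst.eventually hnear).and self_mem_nhdsWithin).exists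
  have hopen : IsOpen (Set.univ.pi (fun _ : Fin k => Set.Ioi (0 : ℝ)) ∩
      (fun c => ξ + f c) ⁻¹' interior U) :=
    (isOpen_set_pi Set.finite_univ fun _ _ => isOpen_Ioi).inter (isOpen_interior.preimage hcont)
  obtain ⟨c, ⟨hc, hcU⟩, hcP⟩ := (dense_forall_add_notMem_of_surjective hf ξ hP
    hproper).inter_open_nonempty _ hopen ⟨fun _ => r, fun _ _ => hr, hrU⟩
  refine ⟨ξ + f c, interior_subset hcU, ?_, hcP⟩
  rw [add_sub_cancel_left, Kcone_eq_realCone_univ]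
  exact mem_realCone_iff.mpr ⟨c, fun i => (hc i trivial).le, rfl⟩

/-- `ζ` is not in the linear span of any lower-dimensional cone of the fan. -/
def IsGeneric (F : StackyFan d k) (ζ : Fin d → ℝ) : Prop :=
  ∀ I ∈ F.cones, I.card < d → ζ ∉ Submodule.span ℝ ((fun i => intPt (F.v i)) '' I)

/-- `ζ` is a generic vector of `ξ + K` so close to `ξ` that passing from `ξ` to `ζ` turns no
negative coordinate, with respect to a full-dimensional cone, into a positive one. The half-open
cones in direction `ζ` then decompose the points of `K` from which `ξ` points into `K`. -/
structure IsGenericPerturbation (F : StackyFan d k) (ξ ζ : Fin d → ℝ) : Prop where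
  isGeneric : IsGeneric F ζ
  sub_mem : ζ - ξ ∈ Kcone F.v
  repr_nonneg : ∀ (s : FullCone F) (i : s.1), 0 < s.basis.repr ζ i → 0 ≤ s.basis.repr ξ i

lemma continuous_basis_repr {F : StackyFan d k} (s : FullCone F) (i : s.1) :
    Continuous fun x => s.basis.repr x i :=
  (s.basis.coord i).continuous_of_finiteDimensional

lemma exists_isGenericPerturbation {F : StackyFan d k}
    (hspan : Submodule.span ℝ (Set.range fun i => intPt (F.v i)) = ⊤) (ξ : Fin d → ℝ) :
    ∃ ζ, IsGenericPerturbation F ξ ζ := by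
  have hU : ∀ᶠ x in 𝓝 ξ, ∀ (s : FullCone F) (i : s.1),
      s.basis.repr ξ i < 0 → s.basis.repr x i < 0 := by
    refine eventually_all.mpr fun s => eventually_all.mpr fun i => ?_
    by_cases hi : s.basis.repr ξ i < 0
    · exact ((continuous_basis_repr s i).continuousAt.eventually_lt_const hi).mono
        fun _ hx _ => hx
    · exact Eventually.of_forall fun _ h => absurd h hi
  let P := (fun I : Finset (Fin k) => Submodule.span ℝ ((fun i => intPt (F.v i)) '' I)) ''
    {I | I ∈ F.cones ∧ I.card < d}
  have hproper : ∀ W ∈ P, W ≠ ⊤ := by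
    classical
    rintro _ ⟨I, ⟨-, hI⟩, rfl⟩ htop
    have hle : finrank ℝ (Submodule.span ℝ ((fun i => intPt (F.v i)) '' (I : Set (Fin k)))) ≤
        I.card := by
      rw [← Finset.coe_image]
      exact (finrank_span_finset_le_card _).trans Finset.card_image_le
    dsimp only at htop
    rw [htop, finrank_top, finrank_fin_fun] at hle
    omega
  obtain ⟨ζ, hζU, hζ, hζP⟩ := exists_mem_nhds_sub_mem_Kcone_forall_notMem hspan hU
    (Set.to_countable P) hproper
  exact ⟨ζ, fun I hI hcard => hζP _ ⟨I, ⟨hI, hcard⟩, rfl⟩, hζ, fun s i hpos =>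
    not_lt.mp fun hneg => (hζU s i hneg).not_gt hpos⟩

lemma IsGeneric.repr_ne_zero {F : StackyFan d k} {ζ : Fin d → ℝ} (hζ : IsGeneric F ζ)
    (s : FullCone F) (i : s.1) : s.basis.repr ζ i ≠ 0 := by
  intro hzero
  have hcard : (s.1.erase i).card < d := (Finset.card_erase_lt_of_mem i.2).trans_eq s.2.2
  refine hζ _ (F.downClosed _ s.2.1 _ (Finset.erase_subset _ _)) hcard ?_
  have hmem : ζ ∈ Submodule.span ℝ (s.basis '' {j | j ≠ i}) :=
    s.basis.mem_span_image.mpr fun j hj hji => Finsupp.mem_support_iff.mp hj (hji ▸ hzero)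
  refine Submodule.span_mono ?_ hmem
  rintro _ ⟨j, hj, rfl⟩
  exact ⟨j, Finset.mem_coe.mpr (Finset.mem_erase.mpr ⟨fun h => hj (Subtype.ext h), j.2⟩),
    (s.basis_apply j).symm⟩

lemma eventually_add_smul_notMem {V : Type*} [AddCommGroup V] [Module ℝ V] {W : Submodule ℝ V}
    {ζ : V} (hζ : ζ ∉ W) (x : V) : ∀ᶠ ε in 𝓝[>] (0 : ℝ), x + ε • ζ ∉ W := by
  by_cases hx : ∃ δ : ℝ, x + δ • ζ ∈ W
  · obtain ⟨δ, hδ⟩ := hx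
    have hne : ∀ᶠ ε in 𝓝[>] (0 : ℝ), ε ≠ δ := by
      rcases le_or_gt δ 0 with h | h
      · exact eventually_mem_nhdsWithin.mono fun ε hε => (h.trans_lt hε).ne'
      · exact (eventually_lt_nhds h).filter_mono nhdsWithin_le_nhds |>.mono fun ε hε => hε.ne
    refine hne.mono fun ε hε hmem => hζ ?_
    have hsub : (ε - δ) • ζ ∈ W := by
      simpa [sub_smul] using W.sub_mem hmem hδ
    exact (W.smul_mem_iff (sub_ne_zero.mpr hε)).mp hsub
  · exact Eventually.of_forall fun ε hε => hx ⟨ε, hε⟩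

lemma eventually_pos_add_mul {a : ℝ} (ha : 0 < a) (b : ℝ) :
    ∀ᶠ ε in 𝓝[>] (0 : ℝ), 0 < a + ε * b := by
  have hlim : Tendsto (fun ε => a + ε * b) (𝓝[>] 0) (𝓝 (a + 0 * b)) :=
    (Continuous.tendsto (by fun_prop) _).mono_left nhdsWithin_le_nhds
  exact hlim.eventually_const_lt (by simpa using ha)

/-- The full-dimensional cone `s` without those facets through which `ζ` points out of `s`. -/
def halfOpenCone {F : StackyFan d k} (ζ : Fin d → ℝ) (s : FullCone F) : Set (Fin d → ℝ) :=
  {x | ∀ i, 0 < s.basis.repr x i ∨ s.basis.repr x i = 0 ∧ 0 < s.basis.repr ζ i}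

section HalfOpenCone

variable {F : StackyFan d k} {ξ ζ x y : Fin d → ℝ} {s t : FullCone F}

lemma halfOpenCone_subset_realCone : halfOpenCone ζ s ⊆ realCone F.v s.1 := fun _ hx =>
  s.mem_realCone_iff_repr.mpr fun i => (hx i).elim le_of_lt fun h => h.1.ge

lemma eventually_repr_pos_of_mem_halfOpenCone (hx : x ∈ halfOpenCone ζ s) :
    ∀ᶠ ε in 𝓝[>] (0 : ℝ), ∀ i, 0 < s.basis.repr (x + ε • ζ) i := by
  refine eventually_all.mpr fun i => ?_
  simp only [map_add, map_smul, Finsupp.add_apply, Finsupp.smul_apply, smul_eq_mul]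
  rcases hx i with hi | ⟨hi, hζ⟩
  · exact eventually_pos_add_mul hi _
  · filter_upwards [self_mem_nhdsWithin] with ε hε
    rw [hi, zero_add]
    exact mul_pos hε hζ

lemma mem_halfOpenCone_of_frequently (hζ : IsGeneric F ζ)
    (hx : ∃ᶠ ε in 𝓝[>] (0 : ℝ), x + ε • ζ ∈ realCone F.v s.1) : x ∈ halfOpenCone ζ s := by
  intro i
  have hfreq : ∃ᶠ ε in 𝓝[>] (0 : ℝ), 0 < ε ∧ 0 ≤ s.basis.repr x i + ε * s.basis.repr ζ i :=
    (hx.and_eventually self_mem_nhdsWithin).mono fun ε ⟨hε, hpos⟩ =>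
      ⟨hpos, by simpa using s.mem_realCone_iff_repr.mp hε i⟩
  have hnonneg : 0 ≤ s.basis.repr x i := by
    by_contra! hneg
    obtain ⟨ε, ⟨-, hε⟩, hε'⟩ := (hfreq.and_eventually
      (eventually_pos_add_mul (neg_pos.mpr hneg) (-s.basis.repr ζ i))).exists
    linarith
  refine hnonneg.lt_or_eq.imp_right fun hzero => ⟨hzero.symm, ?_⟩
  obtain ⟨ε, hε, hεζ⟩ := hfreq.exists
  rw [← hzero, zero_add] at hεζ
  exact (nonneg_of_mul_nonneg_right hεζ hε).lt_of_ne (hζ.repr_ne_zero s i).symm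

lemma eq_of_mem_halfOpenCone (hs : x ∈ halfOpenCone ζ s) (ht : x ∈ halfOpenCone ζ t) :
    s = t := by
  obtain ⟨ε, hεs, hεt⟩ := ((eventually_repr_pos_of_mem_halfOpenCone hs).and
    (eventually_repr_pos_of_mem_halfOpenCone ht)).exists
  exact FullCone.eq_of_repr_pos hεs (t.mem_realCone_iff_repr.mpr fun i => (hεt i).le)

lemma exists_mem_halfOpenCone (hsupp : support F = Kcone F.v) (hζ : IsGeneric F ζ)
    (hx : ∃ᶠ ε in 𝓝[>] (0 : ℝ), x + ε • ζ ∈ Kcone F.v) :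
    ∃ s : FullCone F, x ∈ halfOpenCone ζ s := by
  by_contra! hnone
  have hevent : ∀ᶠ ε in 𝓝[>] (0 : ℝ), ∀ I ∈ F.cones, x + ε • ζ ∉ realCone F.v I := by
    refine (Filter.eventually_all_finset _).mpr fun I hI => ?_
    by_cases hcard : I.card < d
    · exact (eventually_add_smul_notMem (hζ I hI hcard) x).mono fun ε hε hmem =>
        hε (mem_span_of_mem_realCone hmem)
    · have hle : I.card ≤ d := by
        simpa using (F.simplicial I hI).fintype_card_le_finrank
      exact not_frequently.mp fun hfreq =>
        hnone ⟨I, hI, hle.antisymm (not_lt.mp hcard)⟩ (mem_halfOpenCone_of_frequently hζ hfreq)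
  obtain ⟨ε, hεK, hε⟩ := (hx.and_eventually hevent).exists
  obtain ⟨I, hI, hmem⟩ := exists_mem_cones hsupp hεK
  exact hε I hI hmem

lemma IsGeneric.exists_add_mem_halfOpenCone (hζ : IsGeneric F ζ)
    (hsupp : support F = Kcone F.v) (hx : x ∈ Kcone F.v) (hy : y ∈ halfOpenCone ζ s) :
    ∃ t : FullCone F, x + y ∈ halfOpenCone ζ t := by
  refine exists_mem_halfOpenCone hsupp hζ (Eventually.frequently ?_)
  filter_upwards [eventually_repr_pos_of_mem_halfOpenCone hy] with ε hε
  rw [add_assoc]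
  exact add_mem_Kcone hx (realCone_subset_Kcone _ _
    (s.mem_realCone_iff_repr.mpr fun i => (hε i).le))

lemma IsGenericPerturbation.eventually_add_smul_mem_Kcone_iff
    (h : IsGenericPerturbation F ξ ζ) (hsupp : support F = Kcone F.v) :
    (∀ᶠ ε in 𝓝[>] (0 : ℝ), x + ε • ξ ∈ Kcone F.v) ↔
      ∃ s : FullCone F, x ∈ halfOpenCone ζ s := by
  constructor
  · refine fun hxξ => exists_mem_halfOpenCone hsupp h.isGeneric (Eventually.frequently ?_)
    filter_upwards [hxξ, self_mem_nhdsWithin] with ε hε hpos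
    have := add_mem_Kcone hε (smul_mem_Kcone hpos.le h.sub_mem)
    rwa [smul_sub, add_assoc, add_sub_cancel] at this
  · rintro ⟨s, hs⟩
    have hnonneg : ∀ᶠ ε in 𝓝[>] (0 : ℝ), ∀ i, 0 ≤ s.basis.repr (x + ε • ξ) i := by
      refine eventually_all.mpr fun i => ?_
      simp only [map_add, map_smul, Finsupp.add_apply, Finsupp.smul_apply, smul_eq_mul]
      rcases hs i with hi | ⟨hi, hζ⟩
      · exact (eventually_pos_add_mul hi _).mono fun _ => le_of_lt
      · filter_upwards [self_mem_nhdsWithin] with ε hε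
        rw [hi, zero_add]
        exact mul_nonneg (le_of_lt hε) (h.repr_nonneg s i hζ)
    exact hnonneg.mono fun ε hε => realCone_subset_Kcone _ _ (s.mem_realCone_iff_repr.mpr hε)

lemma exists_mem_realCone_fullCone
    (hspan : Submodule.span ℝ (Set.range fun i => intPt (F.v i)) = ⊤)
    (hsupp : support F = Kcone F.v) (hx : x ∈ Kcone F.v) :
    ∃ s : FullCone F, x ∈ realCone F.v s.1 := by
  obtain ⟨ζ, hζ⟩ := exists_isGenericPerturbation hspan 0
  obtain ⟨s, hs⟩ := (hζ.eventually_add_smul_mem_Kcone_iff hsupp (x := x)).mp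
    (Eventually.of_forall fun ε => by simpa only [smul_zero, add_zero] using hx)
  exact ⟨s, halfOpenCone_subset_realCone hs⟩

variable (F) in
/-- A real function on `K` that is linear on each maximal cone and strictly larger elsewhere than
its linear extension from that cone; for a triangulation this is what regularity provides. -/
def HasStrictSupportFunction : Prop :=
  ∃ η : (Fin d → ℝ) → ℝ, ∀ I, IsMaxCone F I → ∃ L : (Fin d → ℝ) →ₗ[ℝ] ℝ,
    (∀ x ∈ realCone F.v I, η x = L x) ∧ ∀ x ∈ Kcone F.v, x ∉ realCone F.v I → L x < η x

/-- A real function on the full-dimensional cones that drops whenever one passes from the half-open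
cone containing a point to another cone containing it. -/
def IsHeight (ζ : Fin d → ℝ) (height : FullCone F → ℝ) : Prop :=
  ∀ ⦃s t x⦄, x ∈ halfOpenCone ζ s → x ∈ realCone F.v t.1 → s ≠ t → height t < height s

lemma HasStrictSupportFunction.exists_isHeight (hF : HasStrictSupportFunction F)
    (ζ : Fin d → ℝ) : ∃ height : FullCone F → ℝ, IsHeight ζ height := by
  obtain ⟨η, hη⟩ := hF
  choose L hL using fun s : FullCone F => hη s.1 s.isMaxCone
  refine ⟨fun s => L s ζ, fun s t x hs ht hst => ?_⟩
  obtain ⟨ε, hε, hpos⟩ :=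
    ((eventually_repr_pos_of_mem_halfOpenCone hs).and self_mem_nhdsWithin).exists
  have hmem : x + ε • ζ ∈ realCone F.v s.1 := s.mem_realCone_iff_repr.mpr fun i => (hε i).le
  have hlt : L t (x + ε • ζ) < L s (x + ε • ζ) := by
    rw [← (hL s).1 _ hmem]
    exact (hL t).2 _ (realCone_subset_Kcone _ _ hmem) fun h => hst (FullCone.eq_of_repr_pos hε h)
  have heq : L t x = L s x := by
    rw [← (hL t).1 x ht, ← (hL s).1 x (halfOpenCone_subset_realCone hs)]
  simp only [map_add, map_smul, heq, smul_eq_mul, add_lt_add_iff_left] at hlt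
  exact lt_of_mul_lt_mul_left hlt (le_of_lt hpos)

end HalfOpenCone

/-! ### Monomial bases of `ℂ[𝚺]` and `ℂ[𝚺;χ]` -/

lemma intPt_zero : intPt (0 : Fin d → ℤ) = 0 :=
  funext fun _ => Int.cast_zero

lemma zero_mem_latticeK (v : Fin k → Fin d → ℤ) : 0 ∈ latticeK v := by
  change intPt 0 ∈ Kcone v
  exact intPt_zero (d := d) ▸ realCone_subset_Kcone v ∅ (zero_mem_realCone v ∅)

lemma add_mem_latticeK {v : Fin k → Fin d → ℤ} {a b : Fin d → ℤ} (ha : a ∈ latticeK v)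
    (hb : b ∈ latticeK v) : a + b ∈ latticeK v := by
  change intPt (a + b) ∈ Kcone v
  exact intPt_add a b ▸ add_mem_Kcone ha hb

lemma add_mem_Ppts {v : Fin k → Fin d → ℤ} {χ : Fin d → ℝ} {a w : Fin d → ℤ}
    (ha : a ∈ latticeK v) (hw : w ∈ Ppts v χ) : a + w ∈ Ppts v χ := by
  change intPt (a + w) + χ ∈ Kcone v
  rw [intPt_add, add_assoc]
  exact add_mem_Kcone ha hw

section Relations

variable (F : StackyFan d k) (χ : Fin d → ℝ)

lemma Rgen_mul_Rgen {a b : latticeK F.v} (h : commonCone F (intPt a) (intPt b)) :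
    Rgen F a * Rgen F b = Rgen F ⟨a + b, add_mem_latticeK a.2 b.2⟩ :=
  Ideal.Quotient.eq.mpr (Ideal.subset_span (Or.inl (Or.inl ⟨a, b, _, h, rfl, rfl⟩)))

lemma Rgen_mul_Rgen_eq_zero {a b : latticeK F.v} (h : ¬commonCone F (intPt a) (intPt b)) :
    Rgen F a * Rgen F b = 0 :=
  Ideal.Quotient.eq_zero_iff_mem.mpr (Ideal.subset_span (Or.inl (Or.inr ⟨a, b, h, rfl⟩)))

lemma Rgen_zero : Rgen F ⟨0, zero_mem_latticeK F.v⟩ = 1 :=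
  Ideal.Quotient.eq.mpr (Ideal.subset_span (Or.inr ⟨_, rfl, rfl⟩))

lemma adjoin_range_Rgen : Algebra.adjoin ℂ (Set.range (Rgen F)) = ⊤ := by
  have hrange : Set.range (Rgen F) =
      Ideal.Quotient.mkₐ ℂ (Ideal.span (relR F)) '' Set.range MvPolynomial.X :=
    Set.range_comp _ _
  rw [hrange, ← AlgHom.map_adjoin, MvPolynomial.adjoin_range_X, Algebra.map_top,
    AlgHom.range_eq_top]
  exact Ideal.Quotient.mkₐ_surjective ℂ _

lemma span_range_Rgen : Submodule.span ℂ (Set.range (Rgen F)) = ⊤ := by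
  have hclosure : ∀ x ∈ Submonoid.closure (Set.range (Rgen F)), x ∈ Set.range (Rgen F) ∨ x = 0 := by
    intro x hx
    induction hx using Submonoid.closure_induction with
    | mem x hx => exact Or.inl hx
    | one => exact Or.inl ⟨_, Rgen_zero F⟩
    | mul x y _ _ hx hy =>
      rcases hx with ⟨a, rfl⟩ | rfl
      · rcases hy with ⟨b, rfl⟩ | rfl
        · by_cases h : commonCone F (intPt a) (intPt b)
          · exact Or.inl ⟨_, (Rgen_mul_Rgen F h).symm⟩
          · exact Or.inr (Rgen_mul_Rgen_eq_zero F h)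
        · exact Or.inr (mul_zero _)
      · exact Or.inr (zero_mul _)
  rw [eq_top_iff, ← Algebra.top_toSubmodule, ← adjoin_range_Rgen, Algebra.adjoin_eq_span,
    Submodule.span_le]
  intro x hx
  rcases hclosure x hx with h | rfl
  exacts [Submodule.subset_span h, Submodule.zero_mem _]

lemma Rgen_smul_Mgen {a : latticeK F.v} {w : Ppts F.v χ}
    (h : commonCone F (intPt a) (intPt w + χ)) :
    Rgen F a • Mgen F χ w = Mgen F χ ⟨a + w, add_mem_Ppts a.2 w.2⟩ := by
  rw [Mgen, ← Submodule.Quotient.mk_smul, Finsupp.smul_single, smul_eq_mul, mul_one]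
  exact (Submodule.Quotient.eq _).mpr (Submodule.subset_span (Or.inl ⟨a, w, _, h, rfl, rfl⟩))

lemma Rgen_smul_Mgen_eq_zero {a : latticeK F.v} {w : Ppts F.v χ}
    (h : ¬commonCone F (intPt a) (intPt w + χ)) : Rgen F a • Mgen F χ w = 0 := by
  rw [Mgen, ← Submodule.Quotient.mk_smul, Finsupp.smul_single, smul_eq_mul, mul_one]
  exact (Submodule.Quotient.mk_eq_zero _).mpr (Submodule.subset_span (Or.inr ⟨a, w, h, rfl⟩))

lemma restrictScalars_span_Mgen_image {U : Set (Ppts F.v χ)}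
    (hU : ∀ (a : latticeK F.v) (w : Ppts F.v χ), w ∈ U → commonCone F (intPt a) (intPt w + χ) →
      (⟨a + w, add_mem_Ppts a.2 w.2⟩ : Ppts F.v χ) ∈ U) :
    (Submodule.span (Rring F) (Mgen F χ '' U)).restrictScalars ℂ =
      Submodule.span ℂ (Mgen F χ '' U) := by
  have hsmul (r : Rring F) (x : Mmod F χ) (hx : x ∈ Submodule.span ℂ (Mgen F χ '' U)) :
      r • x ∈ Submodule.span ℂ (Mgen F χ '' U) := by
    have hr : r ∈ Submodule.span ℂ (Set.range (Rgen F)) := span_range_Rgen F ▸ Submodule.mem_top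
    induction hr, hx using Submodule.span_induction₂ with
    | mem_mem _ _ ha hw =>
      obtain ⟨a, rfl⟩ := ha
      obtain ⟨w, hw, rfl⟩ := hw
      by_cases h : commonCone F (intPt a) (intPt w + χ)
      · exact Rgen_smul_Mgen F χ h ▸ Submodule.subset_span ⟨_, hU a w hw h, rfl⟩
      · exact Rgen_smul_Mgen_eq_zero F χ h ▸ Submodule.zero_mem _
    | zero_left x _ => rw [zero_smul (Rring F) x]; exact Submodule.zero_mem _
    | zero_right r _ => rw [smul_zero r]; exact Submodule.zero_mem _
    | add_left r r' x _ _ _ h h' => rw [add_smul r r' x]; exact Submodule.add_mem _ h h'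
    | add_right r x x' _ _ _ h h' => rw [smul_add r x x']; exact Submodule.add_mem _ h h'
    | smul_left c r x _ _ h => rw [smul_assoc c r x]; exact Submodule.smul_mem _ c h
    | smul_right c r x _ _ h => rw [smul_comm r c x]; exact Submodule.smul_mem _ c h
  refine le_antisymm (fun x (hx : x ∈ Submodule.span (Rring F) (Mgen F χ '' U)) => ?_)
    (Submodule.span_le_restrictScalars ℂ (Rring F) _)
  induction hx using Submodule.span_induction with
  | mem x hx => exact Submodule.subset_span hx
  | zero => exact Submodule.zero_mem _
  | add x y _ _ hx hy => exact Submodule.add_mem _ hx hy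
  | smul r x _ hx => exact hsmul r x hx

lemma span_range_Mgen : Submodule.span ℂ (Set.range (Mgen F χ)) = ⊤ := by
  have hspan : Submodule.span (Rring F) (Set.range (Mgen F χ)) = ⊤ := by
    refine Submodule.eq_top_iff'.mpr fun x => ?_
    obtain ⟨y, rfl⟩ := Submodule.Quotient.mk_surjective _ x
    induction y using Finsupp.induction_linear with
    | zero => exact Submodule.zero_mem _
    | add y z hy hz => exact Submodule.add_mem _ hy hz
    | single w r =>
      have hw := Submodule.smul_mem _ r
        (Submodule.subset_span (R := Rring F) (Set.mem_range_self (f := Mgen F χ) w))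
      rwa [Mgen, ← Submodule.Quotient.mk_smul, Finsupp.smul_single, smul_eq_mul, mul_one] at hw
  have himage := restrictScalars_span_Mgen_image F χ (U := Set.univ) fun _ _ _ _ => Set.mem_univ _
  rwa [Set.image_univ, hspan, Submodule.restrictScalars_top, eq_comm] at himage

end Relations

section Restriction

variable {F : StackyFan d k} {I : Finset (Fin k)} {χ : Fin d → ℝ}

open Classical in
/-- The image of `[n + χ]` under restriction to the cone `I`: the Laurent monomial of `n` if
`n + χ` lies in `I`, and `0` otherwise. -/
noncomputable def coneMonomial (F : StackyFan d k) (I : Finset (Fin k)) (χ : Fin d → ℝ)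
    (n : Fin d → ℤ) : AddMonoidAlgebra ℂ (Fin d → ℤ) :=
  if intPt n + χ ∈ realCone F.v I then .single n 1 else 0

lemma coneMonomial_mul (hI : I ∈ F.cones) {a w : Fin d → ℤ}
    (h : commonCone F (intPt a) (intPt w + χ)) :
    coneMonomial F I 0 a * coneMonomial F I χ w = coneMonomial F I χ (a + w) := by
  have hiff := h.add_mem_realCone_iff hI
  rw [← add_assoc, ← intPt_add] at hiff
  by_cases ha : intPt a ∈ realCone F.v I <;> by_cases hw : intPt w + χ ∈ realCone F.v I <;>
    simp [coneMonomial, hiff, ha, hw, AddMonoidAlgebra.single_mul_single]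

lemma coneMonomial_mul_eq_zero (hI : I ∈ F.cones) {a w : Fin d → ℤ}
    (h : ¬commonCone F (intPt a) (intPt w + χ)) :
    coneMonomial F I 0 a * coneMonomial F I χ w = 0 := by
  by_cases ha : intPt a ∈ realCone F.v I
  · rw [coneMonomial, coneMonomial, if_neg fun hw => h ⟨I, hI, ha, hw⟩, mul_zero]
  · rw [coneMonomial, if_neg (by rwa [add_zero]), zero_mul]

lemma coneMonomial_coeff {n : Fin d → ℤ} (hn : intPt n + χ ∈ realCone F.v I) (w : Fin d → ℤ) :
    (coneMonomial F I χ w).coeff n = if w = n then 1 else 0 := by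
  rcases eq_or_ne w n with rfl | hwn
  · simp [coneMonomial, hn]
  · rw [coneMonomial]
    split_ifs <;> simp [hwn]

lemma coneMonomial_zero : coneMonomial F I 0 0 = 1 := by
  rw [coneMonomial, if_pos (by simpa [intPt_zero] using zero_mem_realCone F.v I)]
  rfl

lemma exists_coneRestriction (hI : I ∈ F.cones) :
    ∃ π : Rring F →ₐ[ℂ] AddMonoidAlgebra ℂ (Fin d → ℤ),
      ∀ a, π (Rgen F a) = coneMonomial F I 0 a := by
  let π₀ : FreeA F.v →ₐ[ℂ] AddMonoidAlgebra ℂ (Fin d → ℤ) :=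
    MvPolynomial.aeval fun a => coneMonomial F I 0 a
  have hker : ∀ p ∈ Ideal.span (relR F), π₀ p = 0 := by
    change Ideal.span (relR F) ≤ RingHom.ker π₀
    refine Ideal.span_le.mpr ?_
    rintro _ ((⟨a, b, c, h, hc, rfl⟩ | ⟨a, b, h, rfl⟩) | ⟨z, hz, rfl⟩) <;>
      simp only [SetLike.mem_coe, RingHom.mem_ker, map_sub, map_mul, map_one, π₀,
        MvPolynomial.aeval_X]
    · rw [hc, coneMonomial_mul hI (by rwa [add_zero]), sub_self]
    · exact coneMonomial_mul_eq_zero hI (by rwa [add_zero])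
    · rw [hz, coneMonomial_zero, sub_self]
  exact ⟨Ideal.Quotient.liftₐ _ π₀ hker, fun a => MvPolynomial.aeval_X _ a⟩

lemma exists_module_coneRestriction (hI : I ∈ F.cones) (χ : Fin d → ℝ) :
    ∃ φ : Mmod F χ →ₗ[ℂ] AddMonoidAlgebra ℂ (Fin d → ℤ),
      ∀ w, φ (Mgen F χ w) = coneMonomial F I χ w := by
  obtain ⟨π, hπ⟩ := exists_coneRestriction hI
  let : Algebra (Rring F) (AddMonoidAlgebra ℂ (Fin d → ℤ)) := π.toRingHom.toAlgebra
  have : IsScalarTower ℂ (Rring F) (AddMonoidAlgebra ℂ (Fin d → ℤ)) :=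
    ⟨fun c r x => by
      change π (c • r) * x = c • (π r * x)
      rw [map_smul, smul_mul_assoc]⟩
  let φ₀ : MfreeR F χ →ₗ[Rring F] AddMonoidAlgebra ℂ (Fin d → ℤ) :=
    Finsupp.linearCombination _ fun w => coneMonomial F I χ w
  have hφ₀ (w : Ppts F.v χ) (a : latticeK F.v) : φ₀ (Finsupp.single w (Rgen F a)) =
      coneMonomial F I 0 a * coneMonomial F I χ w := by
    rw [Finsupp.linearCombination_single, Algebra.smul_def, ← hπ]
    rfl
  have hone (w : Ppts F.v χ) : φ₀ (Finsupp.single w 1) = coneMonomial F I χ w := by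
    rw [Finsupp.linearCombination_single, one_smul]
  have hker : Submodule.span (Rring F) (relM F χ) ≤ LinearMap.ker φ₀ := by
    refine Submodule.span_le.mpr ?_
    rintro _ (⟨a, w, w', h, hw, rfl⟩ | ⟨a, w, h, rfl⟩) <;>
      simp only [SetLike.mem_coe, LinearMap.mem_ker, map_sub, hφ₀, hone]
    · rw [hw, coneMonomial_mul hI h, sub_self]
    · exact coneMonomial_mul_eq_zero hI h
  exact ⟨((Submodule.span _ _).liftQ φ₀ hker).restrictScalars ℂ, hone⟩

end Restriction

section Basis

variable {F : StackyFan d k}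

lemma linearIndependent_Mgen (hsupp : support F = Kcone F.v) (χ : Fin d → ℝ) :
    LinearIndependent ℂ (Mgen F χ) := by
  refine linearIndependent_iff.mpr fun l hl => Finsupp.ext fun w => ?_
  obtain ⟨I, hI, hw⟩ : ∃ I ∈ F.cones, intPt w + χ ∈ realCone F.v I := exists_mem_cones hsupp w.2
  obtain ⟨φ, hφ⟩ := exists_module_coneRestriction hI χ
  have hcoeff := congrArg (fun x => (φ x).coeff w) hl
  simp only [Finsupp.linearCombination_apply, map_finsuppSum, map_smul, hφ, map_zero,
    AddMonoidAlgebra.coeff_finsuppSum, AddMonoidAlgebra.coeff_smul, AddMonoidAlgebra.coeff_zero,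
    Finsupp.sum_apply, Finsupp.smul_apply, coneMonomial_coeff hw, Subtype.coe_inj, smul_eq_mul,
    mul_ite, mul_one, mul_zero, Finsupp.zero_apply] at hcoeff
  simpa using hcoeff

/-- The elements `[n + χ]` as a basis of `ℂ[𝚺;χ]`. -/
noncomputable def monomialBasis (hsupp : support F = Kcone F.v) (χ : Fin d → ℝ) :
    Basis ↥(Ppts F.v χ) ℂ (Mmod F χ) :=
  Basis.mk (linearIndependent_Mgen hsupp χ) (span_range_Mgen F χ).ge

lemma monomialBasis_apply (hsupp : support F = Kcone F.v) (χ : Fin d → ℝ) (w : Ppts F.v χ) :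
    monomialBasis hsupp χ w = Mgen F χ w :=
  Basis.mk_apply _ _ w

lemma monomialBasis_repr_Mgen (hsupp : support F = Kcone F.v) (χ : Fin d → ℝ) (w : Ppts F.v χ) :
    (monomialBasis hsupp χ).repr (Mgen F χ w) = Finsupp.single w 1 := by
  rw [← monomialBasis_apply hsupp, Basis.repr_self]

lemma mem_Ppts_zero {v : Fin k → Fin d → ℤ} {n : Fin d → ℤ} : n ∈ Ppts v 0 ↔ n ∈ latticeK v := by
  change intPt n + 0 ∈ Kcone v ↔ intPt n ∈ Kcone v
  rw [add_zero]

lemma Rgen_smul_Mgen_zero (hsupp : support F = Kcone F.v) (a : latticeK F.v) :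
    Rgen F a • Mgen F 0 ⟨0, mem_Ppts_zero.mpr (zero_mem_latticeK F.v)⟩ =
      Mgen F 0 ⟨a, mem_Ppts_zero.mpr a.2⟩ := by
  obtain ⟨I, hI, ha⟩ := exists_mem_cones hsupp a.2
  rw [Rgen_smul_Mgen F 0 ⟨I, hI, ha, by simpa [intPt_zero] using zero_mem_realCone F.v I⟩]
  simp only [add_zero]

lemma bijective_toSpanSingleton_Mgen_zero (hsupp : support F = Kcone F.v) :
    Function.Bijective (LinearMap.toSpanSingleton (Rring F) (Mmod F 0)
      (Mgen F 0 ⟨0, mem_Ppts_zero.mpr (zero_mem_latticeK F.v)⟩)) := by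
  set f := LinearMap.toSpanSingleton (Rring F) (Mmod F 0)
    (Mgen F 0 ⟨0, mem_Ppts_zero.mpr (zero_mem_latticeK F.v)⟩)
  have hf (a : latticeK F.v) : f (Rgen F a) = Mgen F 0 ⟨a, mem_Ppts_zero.mpr a.2⟩ :=
    Rgen_smul_Mgen_zero hsupp a
  constructor
  · refine (injective_iff_map_eq_zero f).mpr fun r hr => ?_
    obtain ⟨l, rfl⟩ := (Finsupp.mem_span_range_iff_exists_finsupp (R := ℂ)).mp
      (span_range_Rgen F ▸ Submodule.mem_top (x := r))
    have hind : LinearIndependent ℂ fun a : latticeK F.v => Mgen F 0 ⟨a, mem_Ppts_zero.mpr a.2⟩ :=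
      (linearIndependent_Mgen hsupp 0).comp _ fun a b hab => Subtype.ext (Subtype.mk.inj hab)
    have hl : l = 0 := linearIndependent_iff.mp hind l (by
      rw [← hr, ← f.coe_restrictScalars ℂ, map_finsuppSum]
      simp only [map_smul, LinearMap.coe_restrictScalars, hf, Finsupp.linearCombination_apply])
    rw [hl, Finsupp.sum_zero_index]
  · refine LinearMap.range_eq_top.mp ((Submodule.restrictScalars_eq_top_iff ℂ _ _).mp ?_)
    refine eq_top_iff.mpr ((span_range_Mgen F 0).ge.trans (Submodule.span_le.mpr ?_))
    rintro _ ⟨w, rfl⟩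
    exact ⟨Rgen F ⟨w, mem_Ppts_zero.mp w.2⟩, hf _⟩

end Basis

/-! ### Cells as families of polynomial rings -/

open Classical in
/-- The floor of `x` if `P` holds, and otherwise the largest integer strictly below `x`; it is
nonnegative exactly on `[0, ∞)`, respectively on `(0, ∞)`. -/
noncomputable def halfOpenFloor (P : Prop) (x : ℝ) : ℤ := if P then ⌊x⌋ else ⌈x⌉ - 1

lemma halfOpenFloor_intCast_add (P : Prop) (n : ℤ) (x : ℝ) :
    halfOpenFloor P (n + x) = n + halfOpenFloor P x := by
  unfold halfOpenFloor
  split_ifs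
  · exact Int.floor_intCast_add n x
  · rw [Int.ceil_intCast_add, add_sub_assoc]

lemma halfOpenFloor_nonneg_iff {P : Prop} {x : ℝ} :
    0 ≤ halfOpenFloor P x ↔ 0 < x ∨ x = 0 ∧ P := by
  unfold halfOpenFloor
  split_ifs with h
  · rw [Int.floor_nonneg, le_iff_lt_or_eq]
    simp only [h, and_true, eq_comm]
  · rw [sub_nonneg, Int.one_le_ceil_iff]
    simp only [h, and_false, or_false]

namespace FullCone

variable {F : StackyFan d k}

/-- The lattice vector with prescribed integral coordinates in the basis of generators of `s`. -/
noncomputable def latticeCombination (s : FullCone F) : (s.1 → ℤ) →ₗ[ℤ] (Fin d → ℤ) :=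
  Fintype.linearCombination ℤ fun i : s.1 => F.v i

lemma latticeCombination_single (s : FullCone F) (i : s.1) :
    s.latticeCombination (Pi.single i 1) = F.v i := by
  classical
  rw [latticeCombination, Fintype.linearCombination_apply_single, one_smul]

lemma repr_intPt_latticeCombination (s : FullCone F) (μ : s.1 → ℤ) (i : s.1) :
    s.basis.repr (intPt (s.latticeCombination μ)) i = μ i := by
  have hsum : intPt (s.latticeCombination μ) = ∑ i, (μ i : ℝ) • s.basis i := by
    ext j
    simp [latticeCombination, Fintype.linearCombination_apply, intPt, Finset.sum_apply]
  rw [hsum, s.basis.repr_sum_self fun i => (μ i : ℝ)]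

end FullCone

section Cell

variable {F : StackyFan d k} {χ ζ : Fin d → ℝ} {s : FullCone F}

/-- Integral parts of the coordinates of `x` in the basis of generators of `s`, rounded so that
they are all nonnegative exactly when `x` lies in the half-open cone of `s`. -/
noncomputable def cellCoord (ζ : Fin d → ℝ) (s : FullCone F) (x : Fin d → ℝ) : s.1 → ℤ :=
  fun i => halfOpenFloor (0 < s.basis.repr ζ i) (s.basis.repr x i)

lemma cellCoord_nonneg_iff {x : Fin d → ℝ} : 0 ≤ cellCoord ζ s x ↔ x ∈ halfOpenCone ζ s :=
  forall_congr' fun _ => halfOpenFloor_nonneg_iff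

lemma cellCoord_latticeCombination_add (μ : s.1 → ℤ) (n : Fin d → ℤ) :
    cellCoord ζ s (intPt (s.latticeCombination μ + n) + χ) =
      μ + cellCoord ζ s (intPt n + χ) := by
  ext i
  rw [Pi.add_apply, cellCoord, cellCoord, intPt_add, add_assoc, map_add, Finsupp.add_apply,
    FullCone.repr_intPt_latticeCombination, halfOpenFloor_intCast_add]

variable (χ ζ s) in
/-- The points `n + χ` of the fundamental parallelepiped of `s`, half-open in direction `ζ`. -/
abbrev BoxPoint := {n : Fin d → ℤ // cellCoord ζ s (intPt n + χ) = 0}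

lemma cellCoord_latticeCombination_neg_cellCoord_add (n : Fin d → ℤ) :
    cellCoord ζ s
      (intPt (s.latticeCombination (-cellCoord ζ s (intPt n + χ)) + n) + χ) = 0 := by
  rw [cellCoord_latticeCombination_add, neg_add_cancel]

instance : Nonempty (BoxPoint χ ζ s) :=
  ⟨⟨_, cellCoord_latticeCombination_neg_cellCoord_add 0⟩⟩

lemma cellCoord_latticeCombination_add_boxPoint (μ : s.1 → ℤ) (b : BoxPoint χ ζ s) :
    cellCoord ζ s (intPt (s.latticeCombination μ + b.1) + χ) = μ := by
  rw [cellCoord_latticeCombination_add, b.2, add_zero]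

lemma latticeCombination_natCast_add_mem_halfOpenCone (m : s.1 →₀ ℕ) (b : BoxPoint χ ζ s) :
    intPt (s.latticeCombination (fun i => (m i : ℤ)) + b.1) + χ ∈ halfOpenCone ζ s := by
  rw [← cellCoord_nonneg_iff, cellCoord_latticeCombination_add_boxPoint]
  exact fun i => Int.natCast_nonneg _

/-- The point of the half-open cone of `s` lying in the translate of the box by
`∑ i ∈ s, m i • v i`. -/
noncomputable def cellPoint (p : (_ : BoxPoint χ ζ s) × (s.1 →₀ ℕ)) : Ppts F.v χ :=
  ⟨s.latticeCombination (fun i => (p.2 i : ℤ)) + p.1.1, realCone_subset_Kcone _ _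
    (halfOpenCone_subset_realCone (latticeCombination_natCast_add_mem_halfOpenCone p.2 p.1))⟩

lemma cellPoint_injective : Function.Injective (cellPoint (χ := χ) (ζ := ζ) (s := s)) := by
  rintro ⟨b, m⟩ ⟨b', m'⟩ h
  replace h : s.latticeCombination (fun i => (m i : ℤ)) + b.1 =
    s.latticeCombination (fun i => (m' i : ℤ)) + b'.1 := congrArg Subtype.val h
  have hm := cellCoord_latticeCombination_add_boxPoint (fun i => (m i : ℤ)) b
  rw [h, cellCoord_latticeCombination_add_boxPoint] at hm
  obtain rfl : m' = m := Finsupp.ext fun i => Int.natCast_inj.mp (congrFun hm i)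
  obtain rfl : b = b' := Subtype.ext (add_left_cancel h)
  rfl

lemma mem_range_cellPoint_iff {w : Ppts F.v χ} :
    w ∈ Set.range (cellPoint (ζ := ζ) (s := s)) ↔ intPt w + χ ∈ halfOpenCone ζ s := by
  constructor
  · rintro ⟨p, rfl⟩
    exact latticeCombination_natCast_add_mem_halfOpenCone p.2 p.1
  · intro hw
    rw [← cellCoord_nonneg_iff] at hw
    set μ := cellCoord ζ s (intPt w + χ)
    refine ⟨⟨⟨_, cellCoord_latticeCombination_neg_cellCoord_add w⟩,
      Finsupp.equivFunOnFinite.symm fun i => (μ i).toNat⟩, Subtype.ext ?_⟩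
    have hμ : (fun i => ((μ i).toNat : ℤ)) = μ := funext fun i => Int.toNat_of_nonneg (hw i)
    simp only [cellPoint, Finsupp.equivFunOnFinite_symm_apply_apply, hμ, map_neg]
    exact add_neg_cancel_left _ _

lemma generator_add_cellPoint (i : s.1) (b : BoxPoint χ ζ s) (m : s.1 →₀ ℕ) :
    F.v i + (cellPoint ⟨b, m⟩ : Fin d → ℤ) = cellPoint ⟨b, Finsupp.single i 1 + m⟩ := by
  classical
  have hadd : (fun j => (((Finsupp.single i 1 + m : s.1 →₀ ℕ) j : ℕ) : ℤ)) =
      Pi.single i 1 + fun j => (m j : ℤ) := by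
    ext j
    simp [Finsupp.single_apply, Pi.single_apply, eq_comm]
  simp only [cellPoint, hadd, map_add, FullCone.latticeCombination_single, add_assoc]

variable (hsupp : support F = Kcone F.v)

variable (χ ζ s) in
/-- The projection of `ℂ[𝚺;χ]` onto the span of the `[n + χ]` with `n + χ` in the half-open cone of
`s`, the latter identified with the direct sum over the box of copies of `ℂ[X i | i ∈ s]`. -/
noncomputable def cellMap : Mmod F χ →ₗ[ℂ] (BoxPoint χ ζ s →₀ MvPolynomial s.1 ℂ) :=
  (Finsupp.basis fun _ => MvPolynomial.basisMonomials s.1 ℂ).repr.symm.toLinearMap ∘ₗ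
    Finsupp.lcomapDomain cellPoint cellPoint_injective ∘ₗ (monomialBasis hsupp χ).repr.toLinearMap

lemma cellMap_Mgen_cellPoint (b : BoxPoint χ ζ s) (m : s.1 →₀ ℕ) :
    cellMap χ ζ s hsupp (Mgen F χ (cellPoint ⟨b, m⟩)) =
      Finsupp.single b (MvPolynomial.monomial m 1) := by
  simp [cellMap, monomialBasis_repr_Mgen, Finsupp.comapDomain_single]

lemma cellMap_Mgen_eq_zero {w : Ppts F.v χ} (hw : intPt w + χ ∉ halfOpenCone ζ s) :
    cellMap χ ζ s hsupp (Mgen F χ w) = 0 := by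
  simp [cellMap, monomialBasis_repr_Mgen,
    Finsupp.comapDomain_single_of_not_mem_range (mem_range_cellPoint_iff.not.mpr hw)]

lemma cellMap_eq_zero_iff {x : Mmod F χ} : cellMap χ ζ s hsupp x = 0 ↔
    ∀ w ∈ ((monomialBasis hsupp χ).repr x).support, intPt w + χ ∉ halfOpenCone ζ s := by
  simp only [cellMap, LinearMap.comp_apply, LinearEquiv.coe_coe,
    EmbeddingLike.map_eq_zero_iff, Finsupp.lcomapDomain_apply, Finsupp.ext_iff,
    Finsupp.comapDomain_apply, Finsupp.coe_zero, Pi.zero_apply, Finsupp.mem_support_iff,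
    ← mem_range_cellPoint_iff (ζ := ζ) (s := s), Set.mem_range, not_exists, ne_eq]
  exact ⟨fun h w hw p hp => hw (hp ▸ h p), fun h p => by_contra fun hp => h _ hp p rfl⟩

lemma exists_cellMap_eq (y : BoxPoint χ ζ s →₀ MvPolynomial s.1 ℂ) :
    ∃ x, (∀ w ∈ ((monomialBasis hsupp χ).repr x).support, intPt w + χ ∈ halfOpenCone ζ s) ∧
      cellMap χ ζ s hsupp x = y := by
  classical
  let c := (Finsupp.basis fun _ => MvPolynomial.basisMonomials s.1 ℂ).repr y
  refine ⟨(monomialBasis hsupp χ).repr.symm (Finsupp.mapDomain cellPoint c), fun w hw => ?_, ?_⟩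
  · rw [LinearEquiv.apply_symm_apply] at hw
    obtain ⟨p, -, rfl⟩ := Finset.mem_image.mp (Finsupp.mapDomain_support hw)
    exact mem_range_cellPoint_iff.mp ⟨p, rfl⟩
  · simp only [cellMap, LinearMap.comp_apply, LinearEquiv.coe_coe, LinearEquiv.apply_symm_apply,
      Finsupp.lcomapDomain_apply, Finsupp.comapDomain_mapDomain _ cellPoint_injective]
    exact LinearEquiv.symm_apply_apply _ y

lemma cellMap_Rgen_smul_Mgen {i : Fin k} (hi : i ∈ raysIdx F) {w : Ppts F.v χ}
    (hw : intPt w + χ ∈ halfOpenCone ζ s) :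
    cellMap χ ζ s hsupp (Rgen F ⟨F.v i, v_mem_latticeK F.v i⟩ • Mgen F χ w) =
      if h : i ∈ s.1 then (MvPolynomial.X ⟨i, h⟩ : MvPolynomial s.1 ℂ) •
        cellMap χ ζ s hsupp (Mgen F χ w) else 0 := by
  split_ifs with his
  · obtain ⟨⟨b, m⟩, rfl⟩ := mem_range_cellPoint_iff.mpr hw
    have hcommon : commonCone F (intPt (F.v i)) (intPt (cellPoint ⟨b, m⟩) + χ) :=
      ⟨s.1, s.2.1, generator_mem_realCone F.v his, halfOpenCone_subset_realCone hw⟩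
    have hpoint : (⟨F.v i + cellPoint ⟨b, m⟩, add_mem_Ppts (v_mem_latticeK F.v i)
        (cellPoint ⟨b, m⟩).2⟩ : Ppts F.v χ) = cellPoint ⟨b, Finsupp.single ⟨i, his⟩ 1 + m⟩ :=
      Subtype.ext (generator_add_cellPoint ⟨i, his⟩ b m)
    rw [Rgen_smul_Mgen F χ hcommon, hpoint, cellMap_Mgen_cellPoint, cellMap_Mgen_cellPoint,
      Finsupp.smul_single, smul_eq_mul, MvPolynomial.X, MvPolynomial.monomial_mul, one_mul]
  · by_cases hcommon : commonCone F (intPt (F.v i)) (intPt w + χ)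
    · rw [Rgen_smul_Mgen F χ hcommon]
      refine cellMap_Mgen_eq_zero hsupp fun hmem => generator_notMem_realCone F s.2.1 hi his ?_
      refine ((hcommon.add_mem_realCone_iff s.2.1).mp ?_).1
      rw [← add_assoc, ← intPt_add]
      exact halfOpenCone_subset_realCone hmem
    · rw [Rgen_smul_Mgen_eq_zero F χ hcommon, map_zero]

/-- The values of the linear functions `g j` on the generators of the cone `s`. -/
def pairingMatrix (g : Fin d → (Fin d → ℤ) →ₗ[ℤ] ℤ) (s : FullCone F) : Matrix (Fin d) s.1 ℤ :=
  Matrix.of fun j i => g j (F.v i)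

lemma cellMap_Zelt_smul_Mgen (g : Fin d → (Fin d → ℤ) →ₗ[ℤ] ℤ) (j : Fin d) {w : Ppts F.v χ}
    (hw : intPt w + χ ∈ halfOpenCone ζ s) :
    cellMap χ ζ s hsupp (Zelt F (g j) • Mgen F χ w) =
      linearForm ((pairingMatrix g s).map (Int.cast : ℤ → ℂ)) j •
        cellMap χ ζ s hsupp (Mgen F χ w) := by
  classical
  have hterm (i : Fin k) : cellMap χ ζ s hsupp ((if i ∈ raysIdx F then
      algebraMap ℂ (Rring F) (g j (F.v i) : ℤ) * Rgen F ⟨F.v i, v_mem_latticeK F.v i⟩ else 0) •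
        Mgen F χ w) = if h : i ∈ s.1 then
      (MvPolynomial.C ((g j (F.v i) : ℤ) : ℂ) * MvPolynomial.X ⟨i, h⟩ : MvPolynomial s.1 ℂ) •
        cellMap χ ζ s hsupp (Mgen F χ w) else 0 := by
    by_cases hi : i ∈ raysIdx F
    · rw [if_pos hi, mul_smul (algebraMap ℂ (Rring F) (g j (F.v i) : ℤ)) _ (Mgen F χ w),
        algebraMap_smul, map_smul, cellMap_Rgen_smul_Mgen hsupp hi hw]
      split_ifs
      · rw [mul_smul, ← MvPolynomial.algebraMap_eq, algebraMap_smul]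
      · exact smul_zero _
    · have his : i ∉ s.1 := fun h =>
        hi (F.downClosed _ s.2.1 _ (Finset.singleton_subset_iff.mpr h))
      rw [if_neg hi, zero_smul (Rring F) (Mgen F χ w), map_zero, dif_neg his]
  rw [Zelt, Finset.sum_smul, map_sum, linearForm, Finset.sum_smul]
  exact (Finset.sum_congr rfl fun i _ => hterm i).trans
    (Finset.sum_attach_eq_sum_dite s.1 fun i : s.1 =>
      (MvPolynomial.C ((g j (F.v i) : ℤ) : ℂ) * MvPolynomial.X i : MvPolynomial s.1 ℂ) •
        cellMap χ ζ s hsupp (Mgen F χ w)).symm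

end Cell

lemma eq_zero_of_forall_apply_generator {F : StackyFan d k} (s : FullCone F)
    {h : (Fin d → ℤ) →ₗ[ℤ] ℤ} (hs : ∀ i ∈ s.1, h (F.v i) = 0) : h = 0 := by
  let hR : (Fin d → ℝ) →ₗ[ℝ] ℝ := Fintype.linearCombination ℝ fun l => (h (Pi.single l 1) : ℝ)
  have hcast (n : Fin d → ℤ) : hR (intPt n) = h n := by
    conv_rhs => rw [pi_eq_sum_univ' n, map_sum, Int.cast_sum]
    refine (Fintype.linearCombination_apply ..).trans (Finset.sum_congr rfl fun l _ => ?_)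
    rw [map_smul, smul_eq_mul, smul_eq_mul, Int.cast_mul, intPt]
  have hzero : hR = 0 := s.basis.ext fun i => by
    rw [s.basis_apply, hcast, hs i i.2, Int.cast_zero, LinearMap.zero_apply]
  refine LinearMap.ext fun n => Int.cast_injective (α := ℝ) ?_
  rw [← hcast, hzero, LinearMap.zero_apply, LinearMap.zero_apply, Int.cast_zero]

lemma exists_inverse_pairingMatrix {F : StackyFan d k} {g : Fin d → (Fin d → ℤ) →ₗ[ℤ] ℤ}
    (hg : LinearIndependent ℤ g) (s : FullCone F) :
    ∃ V : Matrix s.1 (Fin d) ℂ, (pairingMatrix g s).map (Int.cast : ℤ → ℂ) * V = 1 ∧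
      V * (pairingMatrix g s).map (Int.cast : ℤ → ℂ) = 1 := by
  let e : Fin d ≃ s.1 := (finCongr s.2.2.symm).trans s.1.equivFin.symm
  have hdet : ((pairingMatrix g s).submatrix id e).det ≠ 0 := by
    refine fun hdet => ?_
    obtain ⟨u, hu, huW⟩ := Matrix.exists_vecMul_eq_zero_iff.mpr hdet
    refine hu (funext (Fintype.linearIndependent_iff.mp hg u
      (eq_zero_of_forall_apply_generator s fun i hi => ?_)))
    have := congrFun huW (e.symm ⟨i, hi⟩)
    simpa [Matrix.vecMul, dotProduct, pairingMatrix] using this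
  let M := ((pairingMatrix g s).map (Int.cast : ℤ → ℂ)).submatrix id e
  have hunit : IsUnit M.det := by
    rw [isUnit_iff_ne_zero]
    exact (Int.cast_det _).symm.trans_ne (Int.cast_ne_zero.mpr hdet)
  have hmul : (pairingMatrix g s).map (Int.cast : ℤ → ℂ) * M⁻¹.submatrix e.symm id = 1 :=
    calc _ = M.submatrix id e.symm * M⁻¹.submatrix e.symm id := by simp [M]
      _ = 1 := by rw [Matrix.submatrix_mul_equiv, M.mul_nonsing_inv hunit, Matrix.submatrix_id_id]
  exact ⟨_, hmul, (Matrix.mul_eq_one_comm_of_equiv e).mp hmul⟩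

/-! ### The filtration by height -/

section Filtration

variable {F : StackyFan d k} {χ ζ : Fin d → ℝ} {height : FullCone F → ℝ}

lemma IsHeight.height_lt_of_add_mem (hheight : IsHeight ζ height) {x y : Fin d → ℝ}
    {s t : FullCone F} (hxy : commonCone F x y) (hy : y ∈ halfOpenCone ζ s)
    (hadd : x + y ∈ halfOpenCone ζ t) (hst : s ≠ t) : height t < height s :=
  hheight hy ((hxy.add_mem_realCone_iff t.2.1).mp (halfOpenCone_subset_realCone hadd)).2 hst

variable (χ ζ) in
/-- The indices of the `[n + χ]` with `n + χ` in the half-open cone of a member of `T`. -/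
def cellPts (T : Finset (FullCone F)) : Set (Ppts F.v χ) :=
  {w | ∃ s ∈ T, intPt w + χ ∈ halfOpenCone ζ s}

variable (χ ζ) in
/-- The submodule of `ℂ[𝚺;χ]` generated by the cells of the members of `T`; the pieces of the
filtration of the shadow module arise when `T` is closed under decreasing the height. -/
noncomputable def cellUnion (T : Finset (FullCone F)) : Submodule (Rring F) (Mmod F χ) :=
  Submodule.span (Rring F) (Mgen F χ '' cellPts χ ζ T)

lemma mem_cellUnion_iff (hsupp : support F = Kcone F.v) (hζ : IsGeneric F ζ)
    (hheight : IsHeight ζ height) {T : Finset (FullCone F)}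
    (hT : ∀ t ∈ T, ∀ s, height s < height t → s ∈ T) {x : Mmod F χ} :
    x ∈ cellUnion χ ζ T ↔ ∀ w ∈ ((monomialBasis hsupp χ).repr x).support, w ∈ cellPts χ ζ T := by
  have hstable (a : latticeK F.v) (w : Ppts F.v χ) (hw : w ∈ cellPts χ ζ T)
      (hcommon : commonCone F (intPt a) (intPt w + χ)) :
      (⟨a + w, add_mem_Ppts a.2 w.2⟩ : Ppts F.v χ) ∈ cellPts χ ζ T := by
    obtain ⟨t, ht, hw⟩ := hw
    obtain ⟨s, hs⟩ := hζ.exists_add_mem_halfOpenCone hsupp a.2 hw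
    refine ⟨s, ?_, by rwa [intPt_add, add_assoc]⟩
    rcases eq_or_ne t s with rfl | hts
    exacts [ht, hT t ht s (hheight.height_lt_of_add_mem hcommon hw hs hts)]
  rw [← Submodule.restrictScalars_mem ℂ, cellUnion, restrictScalars_span_Mgen_image F χ hstable,
    ← funext (monomialBasis_apply hsupp χ), Module.Basis.mem_span_image]
  rfl

lemma cellMap_smul_Mgen_eq_zero (hsupp : support F = Kcone F.v) {s : FullCone F}
    {w : Ppts F.v χ} (hw : ∀ a : latticeK F.v, commonCone F (intPt a) (intPt w + χ) →
      intPt a + (intPt w + χ) ∉ halfOpenCone ζ s) (r : Rring F) :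
    cellMap χ ζ s hsupp (r • Mgen F χ w) = 0 := by
  have hr : r ∈ Submodule.span ℂ (Set.range (Rgen F)) := span_range_Rgen F ▸ Submodule.mem_top
  induction hr using Submodule.span_induction with
  | mem _ hr =>
    obtain ⟨a, rfl⟩ := hr
    by_cases h : commonCone F (intPt a) (intPt w + χ)
    · rw [Rgen_smul_Mgen F χ h]
      refine cellMap_Mgen_eq_zero hsupp ?_
      rw [intPt_add, add_assoc]
      exact hw a h
    · rw [Rgen_smul_Mgen_eq_zero F χ h, map_zero]
  | zero => rw [zero_smul (Rring F) (Mgen F χ w), map_zero]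
  | add r r' _ _ h h' => rw [add_smul r r' (Mgen F χ w), map_add, h, h', add_zero]
  | smul c r _ h => rw [smul_assoc c r (Mgen F χ w), map_smul, h, smul_zero]

lemma cellMap_Zelt_smul (hsupp : support F = Kcone F.v) (hheight : IsHeight ζ height)
    {T : Finset (FullCone F)} {s : FullCone F} (hmax : ∀ t ∈ T, height t ≤ height s)
    (g : Fin d → (Fin d → ℤ) →ₗ[ℤ] ℤ) (j : Fin d) {x : Mmod F χ}
    (hx : ∀ w ∈ ((monomialBasis hsupp χ).repr x).support, w ∈ cellPts χ ζ T) :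
    cellMap χ ζ s hsupp (Zelt F (g j) • x) =
      linearForm ((pairingMatrix g s).map (Int.cast : ℤ → ℂ)) j • cellMap χ ζ s hsupp x := by
  replace hx := (monomialBasis hsupp χ).mem_span_image.mpr hx
  induction hx using Submodule.span_induction with
  | mem _ hx =>
    obtain ⟨w, ⟨t, ht, hw⟩, rfl⟩ := hx
    rw [monomialBasis_apply]
    by_cases hws : intPt w + χ ∈ halfOpenCone ζ s
    · exact cellMap_Zelt_smul_Mgen hsupp g j hws
    · have hts : t ≠ s := fun h => hws (h ▸ hw)
      rw [cellMap_Mgen_eq_zero hsupp hws, smul_zero]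
      exact cellMap_smul_Mgen_eq_zero hsupp (fun a hcommon hs =>
        (hheight.height_lt_of_add_mem hcommon hw hs hts).not_ge (hmax t ht)) _
  | zero => simp only [smul_zero, map_zero]
  | add x y _ _ hx hy => simp only [smul_add, map_add, hx, hy]
  | smul c x _ hx => rw [smul_comm, map_smul, hx, map_smul, smul_comm]

variable {g : Fin d → (Fin d → ℤ) →ₗ[ℤ] ℤ}

lemma isRegular_cellUnion_insert (hsupp : support F = Kcone F.v) (hζ : IsGeneric F ζ)
    (hheight : IsHeight ζ height) (hg : LinearIndependent ℤ g) {T : Finset (FullCone F)}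
    {s : FullCone F} (hs : s ∉ T) (hmax : ∀ t ∈ T, height t ≤ height s)
    (hT : ∀ t ∈ T, ∀ s, height s < height t → s ∈ T)
    (hT' : ∀ t ∈ insert s T, ∀ s', height s' < height t → s' ∈ insert s T)
    (hreg : IsWeaklyRegular (cellUnion χ ζ T) (List.ofFn fun j => Zelt F (g j))) :
    IsRegular (cellUnion χ ζ (insert s T)) (List.ofFn fun j => Zelt F (g j)) := by
  have hle : cellUnion χ ζ T ≤ cellUnion χ ζ (insert s T) :=
    Submodule.span_mono (Set.image_mono fun w ⟨t, ht, hw⟩ => ⟨t, Finset.mem_insert_of_mem ht, hw⟩)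
  obtain ⟨V, hWV, hVW⟩ := exists_inverse_pairingMatrix hg s
  refine isRegular_of_ker_eq (N := (cellUnion χ ζ T).submoduleOf (cellUnion χ ζ (insert s T)))
    (f := (cellMap χ ζ s hsupp).toAddMonoidHom.comp (Submodule.subtype _).toAddMonoidHom)
    (fun y => ?_) (fun x => ?_) ?_ ((Submodule.submoduleOfEquivOfLe hle).isWeaklyRegular_congr _
      |>.mpr hreg) (isRegular_finsupp (isRegular_ofFn_linearForm hWV hVW))
  · obtain ⟨x, hx, rfl⟩ := exists_cellMap_eq hsupp y
    exact ⟨⟨x, (mem_cellUnion_iff hsupp hζ hheight hT').mpr fun w hw =>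
      ⟨s, Finset.mem_insert_self s T, hx w hw⟩⟩, rfl⟩
  · obtain ⟨x, hx⟩ := x
    rw [mem_cellUnion_iff hsupp hζ hheight hT'] at hx
    refine (cellMap_eq_zero_iff hsupp).trans (Iff.trans ?_
      (mem_cellUnion_iff hsupp hζ hheight hT).symm)
    refine forall₂_congr fun w hw => ⟨fun hws => ?_, fun ⟨t, ht, hwt⟩ hws => ?_⟩
    · obtain ⟨t, ht, hwt⟩ := hx w hw
      exact ⟨t, Finset.mem_of_mem_insert_of_ne ht fun h => hws (h ▸ hwt), hwt⟩
    · exact hs (eq_of_mem_halfOpenCone hwt hws ▸ ht)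
  · refine List.forall₂_iff_get.mpr ⟨by simp only [List.length_ofFn], fun i _ _ x => ?_⟩
    simp only [List.get_eq_getElem, List.getElem_ofFn]
    exact cellMap_Zelt_smul hsupp hheight (Finset.forall_mem_insert .. |>.mpr ⟨le_rfl, hmax⟩) g _
      ((mem_cellUnion_iff hsupp hζ hheight hT').mp x.2)

lemma isWeaklyRegular_cellUnion (hsupp : support F = Kcone F.v) (hζ : IsGeneric F ζ)
    (hheight : IsHeight ζ height) (hg : LinearIndependent ℤ g) {T : Finset (FullCone F)}
    (hT : ∀ t ∈ T, ∀ s, height s < height t → s ∈ T) :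
    IsWeaklyRegular (cellUnion χ ζ T) (List.ofFn fun j => Zelt F (g j)) := by
  classical
  induction T using Finset.induction_on_max_value height with
  | empty =>
    have hbot : cellUnion χ ζ (∅ : Finset (FullCone F)) = ⊥ := by simp [cellUnion, cellPts]
    have : Subsingleton (cellUnion χ ζ (∅ : Finset (FullCone F))) :=
      Submodule.subsingleton_iff_eq_bot.mpr hbot
    exact isWeaklyRegular_of_subsingleton _
  | insert s T hs hmax ih =>
    have hT₀ : ∀ t ∈ T, ∀ s, height s < height t → s ∈ T := fun t ht r hr =>
      Finset.mem_of_mem_insert_of_ne (hT t (Finset.mem_insert_of_mem ht) r hr)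
        fun h => (h ▸ hr).not_ge (hmax t ht)
    exact (isRegular_cellUnion_insert hsupp hζ hheight hg hs hmax hT₀ hT
      (ih hT₀)).toIsWeaklyRegular

lemma isRegular_cellUnion_univ [Fintype (FullCone F)] [Nonempty (FullCone F)]
    (hsupp : support F = Kcone F.v) (hζ : IsGeneric F ζ) (hheight : IsHeight ζ height)
    (hg : LinearIndependent ℤ g) :
    IsRegular (cellUnion χ ζ (F := F) Finset.univ) (List.ofFn fun j => Zelt F (g j)) := by
  classical
  obtain ⟨s, -, hmax⟩ := Finset.exists_max_image Finset.univ height Finset.univ_nonempty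
  have hT : ∀ t ∈ Finset.univ.erase s, ∀ r, height r < height t → r ∈ Finset.univ.erase s :=
    fun t _ r hr => Finset.mem_erase.mpr
      ⟨fun h => (h ▸ hr).not_ge (hmax t (Finset.mem_univ t)), Finset.mem_univ r⟩
  have hinsert : insert s (Finset.univ.erase s) = Finset.univ :=
    Finset.insert_erase (Finset.mem_univ s)
  have hreg := isRegular_cellUnion_insert (χ := χ) hsupp hζ hheight hg (Finset.notMem_erase s _)
    (fun t _ => hmax t (Finset.mem_univ t)) hT
    (by simp only [hinsert, Finset.mem_univ, implies_true])
    (isWeaklyRegular_cellUnion hsupp hζ hheight hg hT)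
  rwa [hinsert] at hreg

end Filtration

/-! ### Regular sequences on the ring and its modules -/

section Regular

variable {F : StackyFan d k}

lemma ShadowSub_eq_span (F : StackyFan d k) (χ ξ : Fin d → ℝ) :
    ShadowSub F χ ξ = Submodule.span (Rring F)
      (Mgen F χ '' {w | ∀ᶠ ε in 𝓝[>] (0 : ℝ), intPt w + χ + ε • ξ ∈ Kcone F.v}) := by
  have hiff (w : Ppts F.v χ) : intPt w + χ ∈ ShadowPts F χ ξ ↔
      ∀ᶠ ε in 𝓝[>] (0 : ℝ), intPt w + χ + ε • ξ ∈ Kcone F.v := by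
    rw [(nhdsGT_basis_Ioc (0 : ℝ)).eventually_iff]
    exact ⟨fun h => h.2.2.imp fun ε₀ h₀ => ⟨h₀.1, fun ε hε => h₀.2 ε hε.1 hε.2⟩,
      fun h => ⟨⟨w, fun _ => rfl⟩, w.2, h.imp fun ε₀ h₀ => ⟨h₀.1, fun ε hε hle => h₀.2 ⟨hε, hle⟩⟩⟩⟩
  simp only [Set.image, Set.mem_ofPred_eq, ← hiff, eq_comm (a := Mgen F χ _)]
  rfl

lemma ShadowSub_zero (F : StackyFan d k) (χ : Fin d → ℝ) : ShadowSub F χ 0 = ⊤ := by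
  have huniv : {w : Ppts F.v χ | ∀ᶠ ε in 𝓝[>] (0 : ℝ),
      intPt w + χ + ε • (0 : Fin d → ℝ) ∈ Kcone F.v} = Set.univ :=
    Set.eq_univ_of_forall fun w => by
      simp only [Set.mem_ofPred_eq, smul_zero, add_zero]
      exact Eventually.of_forall fun _ => w.2
  rw [ShadowSub_eq_span, huniv, ← Submodule.restrictScalars_eq_top_iff ℂ,
    restrictScalars_span_Mgen_image F χ fun _ _ _ _ => Set.mem_univ _, Set.image_univ,
    span_range_Mgen]

lemma cellUnion_univ [Fintype (FullCone F)] (hsupp : support F = Kcone F.v) {ξ ζ : Fin d → ℝ}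
    (hζ : IsGenericPerturbation F ξ ζ) (χ : Fin d → ℝ) :
    cellUnion χ ζ (F := F) Finset.univ = ShadowSub F χ ξ := by
  simp only [ShadowSub_eq_span, hζ.eventually_add_smul_mem_Kcone_iff hsupp, cellUnion, cellPts,
    Finset.mem_univ, true_and]

variable {g : Fin d → (Fin d → ℤ) →ₗ[ℤ] ℤ}

lemma isRegular_ShadowSub (hspan : Submodule.span ℝ (Set.range fun i => intPt (F.v i)) = ⊤)
    (hsupp : support F = Kcone F.v) (hF : HasStrictSupportFunction F)
    (hg : LinearIndependent ℤ g) (χ ξ : Fin d → ℝ) :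
    IsRegular (ShadowSub F χ ξ) (List.ofFn fun j => Zelt F (g j)) := by
  have := Fintype.ofFinite (FullCone F)
  obtain ⟨s₀, -⟩ := exists_mem_realCone_fullCone hspan hsupp
    (realCone_subset_Kcone F.v ∅ (zero_mem_realCone F.v ∅))
  have : Nonempty (FullCone F) := ⟨s₀⟩
  obtain ⟨ζ, hζ⟩ := exists_isGenericPerturbation hspan ξ
  obtain ⟨height, hheight⟩ := hF.exists_isHeight ζ
  rw [← cellUnion_univ hsupp hζ]
  exact isRegular_cellUnion_univ hsupp hζ.isGeneric hheight hg

lemma isRegular_Mmod (hspan : Submodule.span ℝ (Set.range fun i => intPt (F.v i)) = ⊤)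
    (hsupp : support F = Kcone F.v) (hF : HasStrictSupportFunction F)
    (hg : LinearIndependent ℤ g) (χ : Fin d → ℝ) :
    IsRegular (Mmod F χ) (List.ofFn fun j => Zelt F (g j)) :=
  ((LinearEquiv.ofTop _ (ShadowSub_zero F χ)).isRegular_congr _).mp
    (isRegular_ShadowSub hspan hsupp hF hg χ 0)

lemma isRegular_Rring (hspan : Submodule.span ℝ (Set.range fun i => intPt (F.v i)) = ⊤)
    (hsupp : support F = Kcone F.v) (hF : HasStrictSupportFunction F)
    (hg : LinearIndependent ℤ g) :
    IsRegular (Rring F) (List.ofFn fun j => Zelt F (g j)) :=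
  ((LinearEquiv.ofBijective _ (bijective_toSpanSingleton_Mgen_zero hsupp)).isRegular_congr _).mpr
    (isRegular_Mmod hspan hsupp hF hg 0)

end Regular

/-! ### The Krull dimension of `ℂ[𝚺]` -/

section KrullDim

variable {F : StackyFan d k}

lemma exists_nsmul_eq_latticeCombination (s : FullCone F) {n : Fin d → ℤ}
    (hn : intPt n ∈ realCone F.v s.1) :
    ∃ D : ℕ, 0 < D ∧ ∃ m : s.1 → ℕ, D • n = s.latticeCombination fun i => (m i : ℤ) := by
  have hinj : Function.Injective s.latticeCombination := fun μ ν h => funext fun i => by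
    have hi := congrArg (fun x => s.basis.repr (intPt x) i) h
    simpa only [FullCone.repr_intPt_latticeCombination, Int.cast_inj] using hi
  have hrank := (LinearMap.range s.latticeCombination).finrank_quotient_add_finrank
  rw [LinearMap.finrank_range_of_inj hinj, finrank_fintype_fun_eq_card, finrank_fintype_fun_eq_card,
    Fintype.card_coe, s.2.2, Fintype.card_fin, Nat.add_eq_right, finrank_eq_zero_iff_isTorsion]
    at hrank
  obtain ⟨⟨c, hc⟩, hcn⟩ := hrank (x := Submodule.Quotient.mk n)
  obtain ⟨μ, hμ⟩ : c • n ∈ LinearMap.range s.latticeCombination :=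
    (Submodule.Quotient.mk_eq_zero _).mp hcn
  have hrepr (i : s.1) : (c : ℝ) * s.basis.repr (intPt n) i = μ i := by
    have hcast : intPt (c • n) = (c : ℝ) • intPt n := funext fun j => Int.cast_mul c (n j)
    rw [← FullCone.repr_intPt_latticeCombination, hμ, hcast, map_smul, Finsupp.smul_apply,
      smul_eq_mul]
  have hnonneg (i : s.1) : 0 ≤ c * μ i := by
    have h := mul_nonneg (mul_self_nonneg (c : ℝ)) (s.mem_realCone_iff_repr.mp hn i)
    rw [mul_assoc, hrepr] at h
    exact_mod_cast h
  refine ⟨(c * c).toNat, ?_, fun i => (c * μ i).toNat, ?_⟩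
  · have := mul_self_pos.mpr (nonZeroDivisors.ne_zero hc)
    lia
  · simp only [Int.toNat_of_nonneg (hnonneg _)]
    rw [← natCast_zsmul, Int.toNat_of_nonneg (mul_self_nonneg c), mul_smul, ← hμ, ← map_smul]
    rfl

/-- The lattice points of a cone. -/
def latticeCone (v : Fin k → Fin d → ℤ) (I : Finset (Fin k)) : AddSubmonoid (Fin d → ℤ) where
  carrier := {n | intPt n ∈ realCone v I}
  add_mem' {a b} ha hb := by
    change intPt (a + b) ∈ realCone v I
    exact intPt_add a b ▸ add_mem_realCone ha hb
  zero_mem' := by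
    change intPt 0 ∈ realCone v I
    exact intPt_zero (d := d) ▸ zero_mem_realCone v I

/-- The map `n ↦ [n]` on the lattice points of a cone of the fan, where it is multiplicative. -/
noncomputable def RgenHom {I : Finset (Fin k)} (hI : I ∈ F.cones) :
    Multiplicative (latticeCone F.v I) →* Rring F where
  toFun n := Rgen F ⟨n.toAdd, realCone_subset_Kcone _ _ n.toAdd.2⟩
  map_one' := Rgen_zero F
  map_mul' a b :=
    (Rgen_mul_Rgen F (a := ⟨a.toAdd, realCone_subset_Kcone _ _ a.toAdd.2⟩)
      (b := ⟨b.toAdd, realCone_subset_Kcone _ _ b.toAdd.2⟩) ⟨I, hI, a.toAdd.2, b.toAdd.2⟩).symm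

lemma exists_Rgen_pow_eq_prod (s : FullCone F) {a : latticeK F.v}
    (ha : intPt a ∈ realCone F.v s.1) :
    ∃ D : ℕ, 0 < D ∧ ∃ m : s.1 → ℕ,
      Rgen F a ^ D = ∏ i : s.1, Rgen F ⟨F.v i, v_mem_latticeK F.v i⟩ ^ m i := by
  obtain ⟨D, hD, m, hm⟩ := exists_nsmul_eq_latticeCombination s ha
  have hsum : D • (⟨a, ha⟩ : latticeCone F.v s.1) =
      ∑ i : s.1, m i • ⟨F.v i, generator_mem_realCone F.v i.2⟩ := by
    ext1
    simpa [FullCone.latticeCombination, Fintype.linearCombination_apply] using hm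
  have := congrArg (fun n => RgenHom s.2.1 (Multiplicative.ofAdd n)) hsum
  simp only [ofAdd_nsmul, ofAdd_sum, map_pow, map_prod] at this
  exact ⟨D, hD, m, this⟩

/-- Points outside a prime ideal lie pairwise in common cones, so their sums stay outside it; if
every cone missed such a point, the sum of these points would lie in no cone at all. -/
lemma exists_fullCone_forall_Rgen_mem_of_isPrime
    (hspan : Submodule.span ℝ (Set.range fun i => intPt (F.v i)) = ⊤)
    (hsupp : support F = Kcone F.v) (p : Ideal (Rring F)) [hp : p.IsPrime] :
    ∃ s : FullCone F, ∀ a : latticeK F.v, intPt a ∉ realCone F.v s.1 → Rgen F a ∈ p := by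
  by_contra! hcontra
  choose a ha hap using hcontra
  have hsum (T : Finset (FullCone F)) :
      ∃ b : latticeK F.v, Rgen F b ∉ p ∧ ∀ s ∈ T, intPt b ∉ realCone F.v s.1 := by
    classical
    induction T using Finset.induction_on with
    | empty =>
      refine ⟨⟨0, zero_mem_latticeK F.v⟩, ?_, fun s hs => absurd hs (Finset.notMem_empty s)⟩
      rw [Rgen_zero]
      exact p.ne_top_iff_one.mp hp.ne_top
    | insert s T _ ih =>
      obtain ⟨b, hb, hbT⟩ := ih
      have hprod := hp.mul_notMem (hap s) hb
      have hcommon : commonCone F (intPt (a s)) (intPt b) := by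
        by_contra h
        exact hprod (Rgen_mul_Rgen_eq_zero F h ▸ p.zero_mem)
      refine ⟨_, Rgen_mul_Rgen F hcommon ▸ hprod, fun t ht => ?_⟩
      rw [intPt_add, hcommon.add_mem_realCone_iff t.2.1]
      rcases Finset.mem_insert.mp ht with rfl | htT
      · exact fun h => ha t h.1
      · exact fun h => hbT t htT h.2
  have := Fintype.ofFinite (FullCone F)
  obtain ⟨b, -, hb⟩ := hsum Finset.univ
  obtain ⟨s, hs⟩ := exists_mem_realCone_fullCone hspan hsupp b.2
  exact hb s (Finset.mem_univ s) hs

lemma ringKrullDim_le_of_surjective_of_forall_map_Rgen_eq_zero {A : Type*} [CommRing A]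
    [Algebra ℂ A] {π : Rring F →ₐ[ℂ] A} (hπ : Function.Surjective π) (s : FullCone F)
    (hs : ∀ a : latticeK F.v, intPt a ∉ realCone F.v s.1 → π (Rgen F a) = 0) :
    ringKrullDim A ≤ d := by
  let x (i : s.1) : A := π (Rgen F ⟨F.v i, v_mem_latticeK F.v i⟩)
  have hadjoin : Algebra.adjoin ℂ (π '' Set.range (Rgen F)) = ⊤ := by
    rwa [← AlgHom.map_adjoin, adjoin_range_Rgen, Algebra.map_top, AlgHom.range_eq_top]
  have hx (i : s.1) : IsIntegral (Algebra.adjoin ℂ (Set.range x)) (x i) :=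
    isIntegral_algebraMap (x := (⟨x i, Algebra.subset_adjoin (Set.mem_range_self i)⟩ :
      Algebra.adjoin ℂ (Set.range x)))
  have hRgen : ∀ y ∈ π '' Set.range (Rgen F), IsIntegral (Algebra.adjoin ℂ (Set.range x)) y := by
    rintro _ ⟨_, ⟨a, rfl⟩, rfl⟩
    by_cases ha : intPt a ∈ realCone F.v s.1
    · obtain ⟨D, hD, m, hm⟩ := exists_Rgen_pow_eq_prod s ha
      refine IsIntegral.of_pow hD ?_
      rw [← map_pow, hm, map_prod]
      exact IsIntegral.prod _ fun i _ => map_pow π _ _ ▸ (hx i).pow (m i)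
    · rw [hs a ha]
      exact isIntegral_zero
  have hcard : Nat.card s.1 = d := by
    rw [Nat.card_eq_fintype_card, Fintype.card_coe, s.2.2]
  exact (ringKrullDim_le_card_of_isIntegral_adjoin x hadjoin hRgen).trans_eq (by rw [hcard])

lemma ringKrullDim_Rring (hspan : Submodule.span ℝ (Set.range fun i => intPt (F.v i)) = ⊤)
    (hsupp : support F = Kcone F.v) (hF : HasStrictSupportFunction F)
    {g : Fin d → ((Fin d → ℤ) →ₗ[ℤ] ℤ)} (hg : LinearIndependent ℤ g) :
    ringKrullDim (Rring F) = d := by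
  refine le_antisymm (ringKrullDim_le_of_forall_isPrime fun p hp => ?_) ?_
  · obtain ⟨s, hs⟩ := exists_fullCone_forall_Rgen_mem_of_isPrime hspan hsupp p
    exact ringKrullDim_le_of_surjective_of_forall_map_Rgen_eq_zero
      (Ideal.Quotient.mkₐ_surjective ℂ p) s fun a ha => Ideal.Quotient.eq_zero_iff_mem.mpr (hs a ha)
  · simpa only [List.length_ofFn] using
      length_le_ringKrullDim_of_isRegular (isRegular_Rring hspan hsupp hF hg)

end KrullDim

end GKZpaper

namespace GKZpaper

/-! ### The Cohen–Macaulay property -/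

lemma span_real_range_intPt_eq_top {ι : Type*} {d : ℕ} {v : ι → Fin d → ℤ}
    (hv : Submodule.span ℤ (Set.range v) = ⊤) :
    Submodule.span ℝ (Set.range fun i => intPt (v i)) = ⊤ := by
  have hintPt (n : Fin d → ℤ) : intPt n ∈ Submodule.span ℝ (Set.range fun i => intPt (v i)) := by
    have hn : n ∈ Submodule.span ℤ (Set.range v) := hv ▸ Submodule.mem_top
    induction hn using Submodule.span_induction with
    | mem _ hn => obtain ⟨i, rfl⟩ := hn; exact Submodule.subset_span ⟨i, rfl⟩
    | zero => exact intPt_zero (d := d) ▸ zero_mem _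
    | add a b _ _ ha hb => exact intPt_add a b ▸ add_mem ha hb
    | smul c a _ ha =>
      have hcast : intPt (c • a) = (c : ℝ) • intPt a := funext fun j => Int.cast_mul c (a j)
      exact hcast ▸ Submodule.smul_mem _ _ ha
  refine eq_top_iff.mpr ((Pi.basisFun ℝ (Fin d)).span_eq ▸ Submodule.span_le.mpr ?_)
  rintro _ ⟨j, rfl⟩
  have hsingle : Pi.basisFun ℝ (Fin d) j = intPt (Pi.single j 1) := by
    ext l
    simp [intPt, Pi.single_apply]
  exact hsingle ▸ hintPt _

lemma linearIndependent_int_of_span_eq_top {d : ℕ} {g : Fin d → ((Fin d → ℤ) →ₗ[ℤ] ℤ)}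
    (hg : Submodule.span ℤ (Set.range g) = ⊤) : LinearIndependent ℤ g :=
  linearIndependent_of_top_le_span_of_card_eq_finrank hg.ge <| by
    rw [Fintype.card_fin, Module.finrank_linearMap_self, Module.finrank_fin_fun]

lemma GKZSetting.hasStrictSupportFunction {d k : ℕ} (S : GKZSetting d k) :
    HasStrictSupportFunction S.F := by
  obtain ⟨η, -, hη⟩ := S.hreg
  exact ⟨η, hη⟩

theorem statement11_general {d k : ℕ} {F : StackyFan d k}
    (hspan : Submodule.span ℝ (Set.range fun i => intPt (F.v i)) = ⊤)
    (hsupp : support F = Kcone F.v) (hF : HasStrictSupportFunction F)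
    {g : Fin d → ((Fin d → ℤ) →ₗ[ℤ] ℤ)} (hg : LinearIndependent ℤ g) (χ ξ : Fin d → ℝ) :
    ringKrullDim (Rring F) = d ∧
    RingTheory.Sequence.IsRegular (Rring F) (List.ofFn fun j => Zelt F (g j)) ∧
    RingTheory.Sequence.IsRegular (Mmod F χ) (List.ofFn fun j => Zelt F (g j)) ∧
    RingTheory.Sequence.IsRegular (ShadowSub F χ ξ) (List.ofFn fun j => Zelt F (g j)) :=
  ⟨ringKrullDim_Rring hspan hsupp hF hg, isRegular_Rring hspan hsupp hF hg,
    isRegular_Mmod hspan hsupp hF hg χ, isRegular_ShadowSub hspan hsupp hF hg χ ξ⟩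

/-- **Proposition 4.2.** The ring `R = ℂ[𝚺]` and the `R`-modules `ℂ[𝚺;χ]` and
`ℂ[𝚺;χ]_ξ` are Cohen–Macaulay of dimension `d`: the ring has Krull dimension `d` and,
for any basis `(g₁,…,g_d)` of `M = Hom(N,ℤ)`, the elements
`Z_j = ∑_{i ∈ I(𝚺)} g_j(vᵢ)[vᵢ]` form a regular sequence in `R`, and hence on
`ℂ[𝚺;χ]` and on `ℂ[𝚺;χ]_ξ` (a maximal regular sequence of length `d = dim`). -/
theorem statement11 {d k : ℕ} (S : GKZSetting d k)
    (g : Fin d → ((Fin d → ℤ) →ₗ[ℤ] ℤ))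
    (hg : Submodule.span ℤ (Set.range g) = ⊤)
    (χ ξ : Fin d → ℝ) :
    ringKrullDim (Rring S.F) = (d : WithBot (WithTop ℕ)) ∧
    RingTheory.Sequence.IsRegular (Rring S.F) (List.ofFn fun j => Zelt S.F (g j)) ∧
    RingTheory.Sequence.IsRegular (Mmod S.F χ) (List.ofFn fun j => Zelt S.F (g j)) ∧
    RingTheory.Sequence.IsRegular (↥(ShadowSub S.F χ ξ))
      (List.ofFn fun j => Zelt S.F (g j)) :=
  statement11_general (span_real_range_intPt_eq_top S.hgen) S.hsupp S.hasStrictSupportFunction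
    (linearIndependent_int_of_span_eq_top hg) χ ξ

end GKZpaper
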